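/- A discrete group G is C*-simple if and only if for every state φ on C*_λ(G), the weak* closed convex hull of the orbit {g·φ : g ∈ G} contains the canonical tracial state τ_λ. -/

import Mathlib

noncomputable section
open scoped ENNReal ComplexOrder lp
open MeasureTheory
set_option maxHeartbeats 1000000
set_option synthInstance.maxHeartbeats 1000000

universe u

variable {G : Type u} [Group G]

theorem translat_mem (g : G) (f : ℓ²(G, ℂ)) : Memℓp (fun h => f (g⁻¹ * h)) 2 := by
  have hf : Summable fun i : G => ‖f i‖ ^ (2 : ℝ≥0∞).toReal :=
    (memℓp_gen_iff (by norm_num)).1 (lp.memℓp f)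
  exact memℓp_gen ((Equiv.mulLeft g⁻¹).summable_iff.2 hf)

/-- The left regular representation of `g ∈ G` as a linear isometric bijection of `ℓ²(G)`,
given by `(λ_g ξ)(h) = ξ(g⁻¹ h)`. -/
def lregE (g : G) : ℓ²(G, ℂ) ≃ₗᵢ[ℂ] ℓ²(G, ℂ) :=
{ toFun := fun f => ⟨fun h => f (g⁻¹ * h), translat_mem g f⟩
  invFun := fun f => ⟨fun h => f (g * h), by
    have := translat_mem g⁻¹ f; show Memℓp _ 2; simpa using this⟩
  map_add' := by intro f₁ f₂; ext h; simp [lp.coeFn_add]; rfl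
  map_smul' := by intro c f; ext h; simp [lp.coeFn_smul]
  left_inv := by intro f; ext h; simp
  right_inv := by intro f; ext h; simp
  norm_map' := by
    intro f
    rw [lp.norm_eq_tsum_rpow (by norm_num) f, lp.norm_eq_tsum_rpow (by norm_num)]
    congr 1
    exact (Equiv.mulLeft g⁻¹).tsum_eq (fun h => ‖f h‖ ^ (2 : ℝ≥0∞).toReal) }

/-- The left regular representation `λ` as bounded operators on `ℓ²(G)`. -/
def lreg (g : G) : ℓ²(G, ℂ) →L[ℂ] ℓ²(G, ℂ) :=
  (lregE g).toContinuousLinearEquiv.toContinuousLinearMap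

variable (G) in
/-- The reduced group C*-algebra `C*_λ(G)`: the norm-closed star subalgebra of the algebra of
bounded operators on `ℓ²(G)` generated by the image of the left regular representation. -/
def redCstar : StarSubalgebra ℂ (ℓ²(G, ℂ) →L[ℂ] ℓ²(G, ℂ)) :=
  (StarAlgebra.adjoin ℂ (Set.range (lreg (G := G)))).topologicalClosure

/-- `λ_g` as an element of the reduced group C*-algebra. -/
def uu (g : G) : redCstar G :=
  ⟨lreg g, StarSubalgebra.le_topologicalClosure _ (StarAlgebra.subset_adjoin ℂ _ ⟨g, rfl⟩)⟩

variable (G) in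
/-- `G` is C*-simple: `C*_λ(G)` has no closed two-sided ideals other than `{0}` and the
whole algebra. -/
def IsCstarSimple : Prop :=
  ∀ I : TwoSidedIdeal (redCstar G), IsClosed (I : Set (redCstar G)) → I = ⊥ ∨ I = ⊤

/-- The vector `δ_e ∈ ℓ²(G)`. -/
def deltaOne : ℓ²(G, ℂ) := letI := Classical.decEq G; lp.single 2 (1 : G) 1

variable (G) in
/-- The canonical tracial state `τ_λ(a) = ⟨a δ_e, δ_e⟩` on the reduced C*-algebra, as a
weak* continuous linear functional. -/
def tau : WeakDual ℂ (redCstar G) :=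
  (innerSL ℂ (deltaOne (G := G))).comp
    ((ContinuousLinearMap.apply ℂ ℓ²(G, ℂ) (deltaOne (G := G))).comp
      { toLinearMap := (redCstar G).subtype.toLinearMap, cont := continuous_subtype_val })

attribute [irreducible] redCstar lreg lregE deltaOne uu tau

/-- A state on `C*_λ(G)`: a unital positive (continuous) linear functional. -/
def IsState (φ : WeakDual ℂ (redCstar G)) : Prop :=
  φ 1 = 1 ∧ ∀ a : redCstar G, 0 ≤ φ (star a * a)

/-- The action of `G` on the dual of `C*_λ(G)`: `(g·φ)(a) = φ(λ_g⁻¹ a λ_g)`. -/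
def dualAct (g : G) (φ : WeakDual ℂ (redCstar G)) : WeakDual ℂ (redCstar G) :=
{ toFun := fun a => φ (uu g⁻¹ * a * uu g)
  map_add' := by
    intro a b
    show φ (uu g⁻¹ * (a + b) * uu g) = φ (uu g⁻¹ * a * uu g) + φ (uu g⁻¹ * b * uu g)
    rw [mul_add, add_mul, map_add]
  map_smul' := by
    intro c a
    show φ (uu g⁻¹ * (c • a) * uu g) = c • φ (uu g⁻¹ * a * uu g)
    rw [mul_smul_comm, smul_mul_assoc, _root_.map_smul]
  cont := (map_continuous φ).comp
      ((continuous_const.mul continuous_id).mul continuous_const) }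

theorem dualAct_continuous (g : G) : Continuous (dualAct (G := G) g) := by
  apply WeakDual.continuous_of_continuous_eval
  intro a
  exact WeakDual.eval_continuous (uu g⁻¹ * a * uu g)

/-!
A proper closed ideal is annihilated by some state, hence by everything in the weak* closed convex
hull of its orbit; the trace is faithful, so a hull containing the trace forces the ideal to be
zero.

Conversely, averaging the orbit of a state against a mean `q` on `ℓ^∞(G)` stays inside the hull.
Take `q` in a minimal left ideal of the compact semigroup of means, and extremal there. Then `q`
behaves like a point of the Furstenberg boundary: it is multiplicative on its Poisson transforms,
so these lie in the multiplicative domain of any `q`-average. The stabilizer `H` of `q` carries an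
invariant mean, and Reiter's condition shows that `ℓ²(G/H)` is weakly contained in the regular
representation. C*-simplicity makes the resulting representation of `C*_λ(G)` faithful, so the
state and the trace both extend to the bounded operators on `ℓ²(G/H)`. There the Poisson
transforms act by multiplication, and equivariance kills the `q`-average of the extended state at
every `λ_s` with `s ∉ H`. Hence the Poisson transform of the values at the conjugates of `λ_s` is
a multiplication operator absorbed by `λ_s`; evaluating the `q`-average of the extended trace on
it kills the value at `λ_s` for all `s ≠ 1`.
-/

/-! ### States -/

section States

variable {A : Type*} [CStarAlgebra A]

theorem norm_sq_map_star_mul_le {χ : A →L[ℂ] ℂ} (hχ : ∀ a, 0 ≤ χ (star a * a)) (a b : A) :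
    ‖χ (star a * b)‖ ^ 2 ≤ ‖χ (star a * a)‖ * ‖χ (star b * b)‖ := by
  let _ := CStarAlgebra.spectralOrder A
  have _ := CStarAlgebra.spectralOrderedRing A
  let f : A →ₚ[ℂ] ℂ := .mk₀ χ fun x hx => by
    obtain ⟨y, rfl⟩ := CStarAlgebra.nonneg_iff_eq_star_mul_self.1 hx
    exact hχ y
  have norm_eq (c : A) : ‖f.toPreGNS c‖ ^ 2 = ‖χ (star c * c)‖ := by
    have h : ((‖f.toPreGNS c‖ ^ 2 : ℝ) : ℂ) = χ (star c * c) := by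
      push_cast
      exact f.preGNS_norm_sq (f.toPreGNS c)
    rw [← h, Complex.norm_real, Real.norm_of_nonneg (sq_nonneg _)]
  rw [← norm_eq a, ← norm_eq b, ← mul_pow]
  exact pow_le_pow_left₀ (norm_nonneg _)
    (norm_inner_le_norm (𝕜 := ℂ) (f.toPreGNS a) (f.toPreGNS b)) 2

theorem map_star_of_nonneg {χ : A →L[ℂ] ℂ} (hχ : ∀ a, 0 ≤ χ (star a * a)) (a : A) :
    χ (star a) = star (χ a) := by
  let _ := CStarAlgebra.spectralOrder A
  have _ := CStarAlgebra.spectralOrderedRing A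
  let f : A →ₚ[ℂ] ℂ := .mk₀ χ fun x hx => by
    obtain ⟨y, rfl⟩ := CStarAlgebra.nonneg_iff_eq_star_mul_self.1 hx
    exact hχ y
  exact map_star f a

/-- A state of a unital C⋆-algebra, encoded as a unital functional of norm at most one. This form
is stable under Hahn–Banach extension; positivity is `IsUnitalContractive.nonneg`. -/
structure IsUnitalContractive (χ : A →L[ℂ] ℂ) : Prop where
  map_one : χ 1 = 1
  norm_apply_le : ∀ a, ‖χ a‖ ≤ ‖a‖

theorem isUnitalContractive_of_nonneg {χ : A →L[ℂ] ℂ} (h_one : χ 1 = 1)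
    (hχ : ∀ a, 0 ≤ χ (star a * a)) : IsUnitalContractive χ where
  map_one := h_one
  norm_apply_le a := by
    let _ := CStarAlgebra.spectralOrder A
    have _ := CStarAlgebra.spectralOrderedRing A
    have cauchy_schwarz : ‖χ a‖ ^ 2 ≤ ‖χ (star a * a)‖ := by
      simpa [h_one] using norm_sq_map_star_mul_le hχ 1 a
    have le_norm_sq : χ (star a * a) ≤ (‖a‖ ^ 2 : ℝ) := by
      obtain ⟨b, hb⟩ := CStarAlgebra.nonneg_iff_eq_star_mul_self.1
        (sub_nonneg.2 (CStarAlgebra.star_mul_le_algebraMap_norm_sq (a := a)))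
      have h := hχ b
      rwa [← hb, map_sub, Algebra.algebraMap_eq_smul_one, ← Complex.coe_smul, map_smul, h_one,
        smul_eq_mul, mul_one, sub_nonneg] at h
    have norm_le := CStarAlgebra.norm_le_norm_of_nonneg_of_le (hχ a) le_norm_sq
    rw [Complex.norm_real, Real.norm_of_nonneg (sq_nonneg _)] at norm_le
    exact (pow_le_pow_iff_left₀ (norm_nonneg _) (norm_nonneg _) two_ne_zero).1
      (cauchy_schwarz.trans norm_le)

namespace IsUnitalContractive

variable {χ : A →L[ℂ] ℂ}

theorem norm_sq_apply_add_mul_I_le (hχ : IsUnitalContractive χ) {a : A} (ha : IsSelfAdjoint a)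
    (t : ℝ) : ‖χ a + t * Complex.I‖ ^ 2 ≤ ‖a‖ ^ 2 + t ^ 2 := by
  set x := a + (t * Complex.I) • (1 : A)
  have star_mul_self : star x * x = a * a + (t ^ 2 : ℂ) • (1 : A) := by
    simp only [x, star_add, ha.star_eq, star_smul, star_one, add_mul, mul_add, smul_mul_assoc,
      mul_smul_comm, one_mul, mul_one, star_mul', Complex.star_def, Complex.conj_I,
      Complex.conj_ofReal]
    match_scalars
    · ring
    · ring
    · linear_combination (-(t : ℂ) ^ 2) * Complex.I_mul_I
  have norm_one_le : ‖(1 : A)‖ ≤ 1 := by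
    cases subsingleton_or_nontrivial A
    · simp [Subsingleton.elim (1 : A) 0]
    · exact CStarRing.norm_one.le
  calc ‖χ a + t * Complex.I‖ ^ 2 = ‖χ x‖ ^ 2 := by simp [x, hχ.map_one]
    _ ≤ ‖x‖ ^ 2 := by gcongr; exact hχ.norm_apply_le x
    _ = ‖a * a + (t ^ 2 : ℂ) • (1 : A)‖ := by
      rw [sq, ← CStarRing.norm_star_mul_self, star_mul_self]
    _ ≤ ‖a‖ * ‖a‖ + ‖(t ^ 2 : ℂ)‖ * 1 := by
      refine (norm_add_le _ _).trans (add_le_add (norm_mul_le _ _) ?_)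
      rw [norm_smul]
      gcongr
    _ = ‖a‖ ^ 2 + t ^ 2 := by simp [sq]

theorem im_apply_eq_zero (hχ : IsUnitalContractive χ) {a : A} (ha : IsSelfAdjoint a) :
    (χ a).im = 0 := by
  by_contra hne
  have h := hχ.norm_sq_apply_add_mul_I_le ha ((‖a‖ ^ 2 + 1) / (2 * (χ a).im))
  rw [Complex.sq_norm, Complex.normSq_apply] at h
  simp only [Complex.add_re, Complex.mul_re, Complex.ofReal_re, Complex.I_re, mul_zero,
    Complex.ofReal_im, Complex.I_im, mul_one, sub_self, add_zero, Complex.add_im,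
    Complex.mul_im] at h
  have cross : 2 * (χ a).im * ((‖a‖ ^ 2 + 1) / (2 * (χ a).im)) = ‖a‖ ^ 2 + 1 := by
    field_simp
  nlinarith [sq_nonneg (χ a).re, sq_nonneg (χ a).im]

theorem nonneg (hχ : IsUnitalContractive χ) (a : A) : 0 ≤ χ (star a * a) := by
  set b := star a * a
  have hb : IsSelfAdjoint b := .star_mul_self a
  have norm_sub_le : ‖algebraMap ℝ A ‖b‖ - b‖ ≤ ‖b‖ := by
    exact_mod_cast (SpectrumRestricts.nnreal_iff_nnnorm hb le_rfl).1
      (SpectrumRestricts.nnreal_iff.2 (spectrum_star_mul_self_nonneg (b := a)))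
  have map_sub : χ (algebraMap ℝ A ‖b‖ - b) = ‖b‖ - χ b := by
    rw [map_sub, Algebra.algebraMap_eq_smul_one, ← Complex.coe_smul, map_smul, hχ.map_one,
      smul_eq_mul, mul_one]
  have re_le : ‖b‖ - (χ b).re ≤ ‖b‖ := by
    have h := ((Complex.re_le_norm _).trans (hχ.norm_apply_le _)).trans norm_sub_le
    rwa [map_sub, Complex.sub_re, Complex.ofReal_re] at h
  exact Complex.nonneg_iff.2 ⟨by linarith, (hχ.im_apply_eq_zero hb).symm⟩

theorem map_star (hχ : IsUnitalContractive χ) (a : A) : χ (star a) = star (χ a) :=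
  map_star_of_nonneg hχ.nonneg a

theorem map_mul_eq_mul_of_map_star_mul_self (hχ : IsUnitalContractive χ) {x : A}
    (hx : χ (star x * x) = star (χ x) * χ x) (a : A) : χ (a * x) = χ a * χ x := by
  set y := x - χ x • 1
  have hy : χ (star y * y) = 0 := by
    simp [y, sub_mul, mul_sub, hx, hχ.map_star, hχ.map_one]
  have h := norm_sq_map_star_mul_le hχ.nonneg (star a) y
  rw [hy, norm_zero, mul_zero, star_star] at h
  have h0 : χ (a * y) = 0 :=
    norm_eq_zero.1 (pow_eq_zero_iff two_ne_zero |>.1 (h.antisymm (sq_nonneg _)))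
  simpa [y, mul_sub, sub_eq_zero, mul_comm] using h0

theorem map_mul_eq_mul_of_map_mul_star_self (hχ : IsUnitalContractive χ) {x : A}
    (hx : χ (x * star x) = χ x * star (χ x)) (a : A) : χ (x * a) = χ x * χ a := by
  have h := hχ.map_mul_eq_mul_of_map_star_mul_self (x := star x)
    (by rw [star_star, hx, hχ.map_star, star_star]) (star a)
  rw [← star_mul, hχ.map_star, hχ.map_star, hχ.map_star, ← star_mul] at h
  exact star_injective h

variable {B : Type*} [CStarAlgebra B]

theorem exists_extension {j : A →⋆ₐ[ℂ] B} (hj : ∀ a, ‖j a‖ = ‖a‖) (hχ : IsUnitalContractive χ) :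
    ∃ ω : B →L[ℂ] ℂ, IsUnitalContractive ω ∧ ∀ a, ω (j a) = χ a := by
  let i : A →ₗᵢ[ℂ] B := ⟨j.toAlgHom.toLinearMap, hj⟩
  obtain ⟨ω, hω, norm_ω⟩ := exists_extension_norm_eq (LinearMap.range i.toLinearMap)
    (χ.comp (i.equivRange.symm : LinearMap.range i.toLinearMap →L[ℂ] A))
  have map_eq (a : A) : ω (j a) = χ a :=
    (hω (i.equivRange a)).trans (congrArg χ (i.equivRange.symm_apply_apply a))
  refine ⟨ω, ⟨by rw [← _root_.map_one j, map_eq, hχ.map_one], fun b => ?_⟩, map_eq⟩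
  refine ω.le_of_opNorm_le (norm_ω.trans_le ?_) b |>.trans_eq (one_mul _)
  exact ContinuousLinearMap.opNorm_le_bound _ zero_le_one fun y =>
    (hχ.norm_apply_le _).trans_eq ((i.equivRange.symm.norm_map y).trans (one_mul _).symm)

open scoped CStarAlgebra in
theorem comp_starAlgHom {ω : B →L[ℂ] ℂ} (hω : IsUnitalContractive ω) (N : A →⋆ₐ[ℂ] B) :
    IsUnitalContractive (ω.comp ⟨N.toAlgHom.toLinearMap, map_continuous N⟩) where
  map_one := (congrArg ω (_root_.map_one N)).trans hω.map_one
  norm_apply_le a := (hω.norm_apply_le _).trans (NonUnitalStarAlgHom.norm_apply_le N a)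

end IsUnitalContractive
end States

/-! ### Bounded functions and convolution of functionals -/

section BoundedFunctions

variable {X Y : Type*}

theorem norm_linfty_apply_le (f : ℓ^∞(X, ℂ)) (x : X) : ‖f x‖ ≤ ‖f‖ :=
  lp.norm_apply_le_norm ENNReal.top_ne_zero f x

/-- The bounded function with values `f` and uniform bound `C`. -/
def linftyOfBound (f : X → ℂ) (C : ℝ) (hf : ∀ x, ‖f x‖ ≤ C) : ℓ^∞(X, ℂ) :=
  ⟨f, memℓp_infty ⟨C, by rintro _ ⟨x, rfl⟩; exact hf x⟩⟩

@[simp] theorem linftyOfBound_apply (f : X → ℂ) (C : ℝ) (hf : ∀ x, ‖f x‖ ≤ C) (x : X) :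
    linftyOfBound f C hf x = f x := rfl

/-- Composition with `σ : X → Y`, as a star homomorphism of algebras of bounded functions. -/
def linftyComp (σ : X → Y) : ℓ^∞(Y, ℂ) →⋆ₐ[ℂ] ℓ^∞(X, ℂ) where
  toFun f := linftyOfBound (fun x => f (σ x)) ‖f‖ fun x => norm_linfty_apply_le f (σ x)
  map_one' := rfl
  map_mul' _ _ := rfl
  map_zero' := rfl
  map_add' _ _ := rfl
  commutes' _ := rfl
  map_star' _ := rfl

@[simp] theorem linftyComp_apply (σ : X → Y) (f : ℓ^∞(Y, ℂ)) (x : X) :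
    linftyComp σ f x = f (σ x) := rfl

variable (G) in
/-- The action of `G` on `ℓ^∞(G)` by left translation, `(g · f)(h) = f(g⁻¹ h)`. -/
def translation : G →* (ℓ^∞(G, ℂ) ≃⋆ₐ[ℂ] ℓ^∞(G, ℂ)) where
  toFun g := .ofStarAlgHom (linftyComp (g⁻¹ * ·)) (linftyComp (g * ·))
    (by ext f h; simp) (by ext f h; simp)
  map_one' := by ext f h; simp
  map_mul' g k := by ext f h; simp [mul_assoc]

@[simp] theorem translation_apply (g : G) (f : ℓ^∞(G, ℂ)) (h : G) :
    translation G g f h = f (g⁻¹ * h) := rfl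

end BoundedFunctions

section Convolution

variable {A : Type*} [CStarAlgebra A] (α : G →* (A ≃⋆ₐ[ℂ] A))

/-- The Poisson transform `T ↦ (g ↦ χ(g⁻¹ · T))` of a functional `χ` on a `G`-C⋆-algebra. -/
def poisson (χ : A →L[ℂ] ℂ) : A →L[ℂ] ℓ^∞(G, ℂ) :=
  have bound (T : A) (g : G) : ‖χ (α g⁻¹ T)‖ ≤ ‖χ‖ * ‖T‖ :=
    (χ.le_opNorm _).trans_eq (by rw [StarAlgEquiv.norm_map])
  LinearMap.mkContinuous
    { toFun T := linftyOfBound (fun g => χ (α g⁻¹ T)) (‖χ‖ * ‖T‖) (bound T)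
      map_add' S T := by ext g; simp
      map_smul' c T := by ext g; simp }
    ‖χ‖ fun T => lp.norm_le_of_forall_le (by positivity) (bound T)

@[simp] theorem poisson_apply (χ : A →L[ℂ] ℂ) (T : A) (g : G) :
    poisson α χ T g = χ (α g⁻¹ T) := rfl

/-- The convolution `μ * χ` of a functional `μ` on `ℓ^∞(G)` with a functional `χ` on a
`G`-C⋆-algebra: the `μ`-average of the translates of `χ`. -/
def conv (μ : ℓ^∞(G, ℂ) →L[ℂ] ℂ) (χ : A →L[ℂ] ℂ) : A →L[ℂ] ℂ := μ.comp (poisson α χ)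

theorem conv_apply (μ : ℓ^∞(G, ℂ) →L[ℂ] ℂ) (χ : A →L[ℂ] ℂ) (T : A) :
    conv α μ χ T = μ (poisson α χ T) := rfl

theorem poisson_conv (ν : ℓ^∞(G, ℂ) →L[ℂ] ℂ) (χ : A →L[ℂ] ℂ) (T : A) :
    poisson α (conv α ν χ) T = poisson (translation G) ν (poisson α χ T) := by
  ext g
  refine congrArg ν ?_
  ext h
  change χ (α h⁻¹ (α g⁻¹ T)) = poisson α χ T (g⁻¹⁻¹ * h)
  simp

theorem conv_assoc (μ ν : ℓ^∞(G, ℂ) →L[ℂ] ℂ) (χ : A →L[ℂ] ℂ) :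
    conv α (conv (translation G) μ ν) χ = conv α μ (conv α ν χ) := by
  ext T
  simp only [conv_apply, poisson_conv]

theorem IsUnitalContractive.conv {μ : ℓ^∞(G, ℂ) →L[ℂ] ℂ} {χ : A →L[ℂ] ℂ}
    (hμ : IsUnitalContractive μ) (hχ : IsUnitalContractive χ) :
    IsUnitalContractive (conv α μ χ) where
  map_one := by
    have h : poisson α χ 1 = 1 := by ext g; simp [hχ.map_one]
    rw [conv_apply, h, hμ.map_one]
  norm_apply_le T := (hμ.norm_apply_le _).trans <|
    lp.norm_le_of_forall_le (norm_nonneg T) fun g =>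
      (hχ.norm_apply_le _).trans_eq (StarAlgEquiv.norm_map _ T)

end Convolution

/-! ### Extremal elements of compact convex semigroups -/

section CompactConvexSemigroup

variable {E : Type*} [AddCommGroup E] [Module ℝ E] [TopologicalSpace E]

/-- `L` is a nonempty closed left ideal of the subsemigroup `K` of `E`, where `E` is multiplied by
the bilinear map `m`. -/
structure IsClosedLeftIdeal (m : E →ₗ[ℝ] E →ₗ[ℝ] E) (K L : Set E) : Prop where
  subset : L ⊆ K
  isClosed : IsClosed L
  nonempty : L.Nonempty
  mul_mem : ∀ x ∈ K, ∀ y ∈ L, m x y ∈ L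

variable [T2Space E] {m : E →ₗ[ℝ] E →ₗ[ℝ] E} {K L : Set E}

theorem IsClosedLeftIdeal.exists_minimal (hK : IsCompact K) (h_nonempty : K.Nonempty)
    (h_mul : ∀ x ∈ K, ∀ y ∈ K, m x y ∈ K) : ∃ L, Minimal (IsClosedLeftIdeal m K) L := by
  have lower_bound : ∀ c ⊆ {L | IsClosedLeftIdeal m K L}, IsChain (· ⊆ ·) c → c.Nonempty →
      ∃ L ∈ {L | IsClosedLeftIdeal m K L}, ∀ s ∈ c, L ⊆ s := by
    intro c hc hchain ⟨s₀, hs₀⟩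
    have : Nonempty c := ⟨s₀, hs₀⟩
    refine ⟨⋂₀ c, ⟨(Set.sInter_subset_of_mem hs₀).trans (hc hs₀).subset,
      isClosed_sInter fun s hs => (hc hs).isClosed, ?_,
      fun x hx y hy s hs => (hc hs).mul_mem x hx y (hy s hs)⟩,
      fun s hs => Set.sInter_subset_of_mem hs⟩
    exact IsCompact.nonempty_sInter_of_directed_nonempty_isCompact_isClosed
      (fun s hs t ht => (hchain.total hs ht).elim (fun h => ⟨s, hs, subset_rfl, h⟩)
        fun h => ⟨t, ht, h, subset_rfl⟩) (fun s hs => (hc hs).nonempty)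
      (fun s hs => hK.of_isClosed_subset (hc hs).isClosed (hc hs).subset)
      (fun s hs => (hc hs).isClosed)
  obtain ⟨L, -, hL⟩ := zorn_superset_nonempty _ lower_bound K
    ⟨subset_rfl, hK.isClosed, h_nonempty, h_mul⟩
  exact ⟨L, hL⟩

theorem IsClosedLeftIdeal.image_mul_right_eq_of_minimal (hL : Minimal (IsClosedLeftIdeal m K) L)
    (hK : IsCompact K) (h_mul : ∀ x ∈ K, ∀ y ∈ K, m x y ∈ K)
    (h_assoc : ∀ x y z, m (m x y) z = m x (m y z)) (h_cont : ∀ y, Continuous (m · y))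
    {y : E} (hy : y ∈ L) : (m · y) '' K = L := by
  have image_subset : (m · y) '' K ⊆ L := by
    rintro _ ⟨x, hx, rfl⟩
    exact hL.prop.mul_mem x hx y hy
  refine image_subset.antisymm (hL.le_of_le ⟨image_subset.trans hL.prop.subset,
    (hK.image (h_cont y)).isClosed, ⟨_, y, hL.prop.subset hy, rfl⟩, ?_⟩ image_subset)
  rintro x hx _ ⟨z, hz, rfl⟩
  exact ⟨m x z, h_mul x hx z hz, h_assoc x z y⟩

variable [IsTopologicalAddGroup E] [ContinuousSMul ℝ E]

theorem IsClosedLeftIdeal.mul_eq_of_mem_extremePoints (hL : Minimal (IsClosedLeftIdeal m K) L)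
    (hK : IsCompact K) (h_assoc : ∀ x y z, m (m x y) z = m x (m y z))
    (h_cont : ∀ y, Continuous (m · y)) (h_convex : Convex ℝ L)
    {q y : E} (hq : q ∈ Set.extremePoints ℝ L) (hy : y ∈ L) : m q y = q := by
  have hLc : IsCompact L := hK.of_isClosed_subset hL.prop.isClosed hL.prop.subset
  have mul_mem {x : E} (hx : x ∈ L) : m x y ∈ L := hL.prop.mul_mem x (hL.prop.subset hx) y hy
  -- By minimality `q` is a value of the left-equivariant map `R`, hence a midpoint in `L`.
  let R : E → E := fun x => (1 / 2 : ℝ) • x + (1 / 2 : ℝ) • m x y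
  have R_subset : R '' L ⊆ L := by
    rintro _ ⟨x, hx, rfl⟩
    exact h_convex hx (mul_mem hx) (by norm_num) (by norm_num) (by norm_num)
  have R_continuous : Continuous R :=
    (continuous_id.const_smul _).add ((h_cont y).const_smul _)
  have R_isClosedLeftIdeal : IsClosedLeftIdeal m K (R '' L) := by
    refine ⟨R_subset.trans hL.prop.subset, (hLc.image R_continuous).isClosed,
      hL.prop.nonempty.image R, ?_⟩
    rintro x hx _ ⟨z, hz, rfl⟩
    exact ⟨m x z, hL.prop.mul_mem x hx z hz, by simp [R, h_assoc]⟩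
  obtain ⟨x, hx, hxq⟩ := hL.le_of_le R_isClosedLeftIdeal R_subset hq.1
  have midpoint : q ∈ openSegment ℝ x (m x y) :=
    ⟨1 / 2, 1 / 2, by norm_num, by norm_num, by norm_num, hxq⟩
  obtain ⟨rfl, hxy⟩ := mem_extremePoints.1 hq |>.2 x hx _ (mul_mem hx) midpoint
  exact hxy

theorem exists_extremal_of_compact_convex_semigroup [LocallyConvexSpace ℝ E] (hK : IsCompact K)
    (h_convex : Convex ℝ K) (h_nonempty : K.Nonempty) (h_mul : ∀ x ∈ K, ∀ y ∈ K, m x y ∈ K)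
    (h_assoc : ∀ x y z, m (m x y) z = m x (m y z)) (h_cont : ∀ y, Continuous (m · y)) :
    ∃ q ∈ K, (∀ x ∈ K, m q (m x q) = q) ∧ q ∈ Set.extremePoints ℝ ((m · q) '' K) := by
  obtain ⟨L, hL⟩ := IsClosedLeftIdeal.exists_minimal hK h_nonempty h_mul
  have image_eq {y : E} (hy : y ∈ L) : (m · y) '' K = L :=
    IsClosedLeftIdeal.image_mul_right_eq_of_minimal hL hK h_mul h_assoc h_cont hy
  obtain ⟨q, hq⟩ := (hK.of_isClosed_subset hL.prop.isClosed hL.prop.subset).extremePoints_nonempty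
    hL.prop.nonempty
  have L_convex : Convex ℝ L := image_eq hq.1 ▸ h_convex.linear_image (m.flip q)
  refine ⟨q, hL.prop.subset hq.1, fun x hx => ?_, (image_eq hq.1).symm ▸ hq⟩
  exact IsClosedLeftIdeal.mul_eq_of_mem_extremePoints hL hK h_assoc h_cont L_convex hq
    (hL.prop.mul_mem x hx q hq.1)

end CompactConvexSemigroup

/-! ### Extremal means -/

section WeakDualInstances

variable {E : Type*} [NormedAddCommGroup E] [NormedSpace ℂ E]

instance : SMulCommClass ℝ ℝ (WeakDual ℂ E) :=
  inferInstanceAs (SMulCommClass ℝ ℝ (E →L[ℂ] ℂ))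

instance : IsScalarTower ℝ ℂ (WeakDual ℂ E) :=
  inferInstanceAs (IsScalarTower ℝ ℂ (E →L[ℂ] ℂ))

instance : LocallyConvexSpace ℝ (WeakDual ℂ E) :=
  inferInstanceAs (LocallyConvexSpace ℝ (WeakBilin (topDualPairing ℂ E)))

end WeakDualInstances

section StateSpace

variable (A : Type*) [CStarAlgebra A]

theorem isCompact_setOf_isUnitalContractive :
    IsCompact {χ : WeakDual ℂ A | IsUnitalContractive (WeakDual.toStrongDual χ)} := by
  have eq_inter : {χ : WeakDual ℂ A | IsUnitalContractive (WeakDual.toStrongDual χ)} =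
      {χ | χ 1 = 1} ∩ ⋂ a, {χ | ‖χ a‖ ≤ ‖a‖} := by
    ext χ
    simp only [Set.mem_inter_iff, Set.mem_iInter]
    exact ⟨fun h => ⟨h.map_one, h.norm_apply_le⟩, fun h => ⟨h.1, h.2⟩⟩
  refine (WeakDual.isCompact_closedBall (0 : StrongDual ℂ A) 1).of_isClosed_subset ?_ ?_
  · rw [eq_inter]
    exact (isClosed_eq (WeakDual.eval_continuous 1) continuous_const).inter <|
      isClosed_iInter fun a => isClosed_le (WeakDual.eval_continuous a).norm continuous_const
  · intro χ hχ
    refine mem_closedBall_zero_iff.2 (ContinuousLinearMap.opNorm_le_bound _ zero_le_one fun a => ?_)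
    rw [one_mul]
    exact hχ.norm_apply_le a

theorem convex_setOf_isUnitalContractive : Convex ℝ {χ : A →L[ℂ] ℂ | IsUnitalContractive χ} := by
  intro χ hχ ω hω s t hs ht hst
  refine ⟨?_, fun a => ?_⟩
  · simp only [add_apply, FunLike.coe_smul, Pi.smul_apply, hχ.map_one, hω.map_one]
    rw [← add_smul, hst, one_smul]
  · calc ‖(s • χ + t • ω) a‖ ≤ s * ‖χ a‖ + t * ‖ω a‖ := by
          refine (norm_add_le _ _).trans_eq ?_
          simp [abs_of_nonneg hs, abs_of_nonneg ht]
      _ ≤ s * ‖a‖ + t * ‖a‖ := by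
          gcongr
          exacts [hχ.norm_apply_le a, hω.norm_apply_le a]
      _ = ‖a‖ := by rw [← add_mul, hst, one_mul]

end StateSpace

section ExtremalMean

/-- A mean `q` on `ℓ^∞(G)` that is an extreme point of the left ideal `{μ * q}` of the convolution
semigroup of means and satisfies `q * (μ * q) = q` for every mean `μ`. It plays the role of a point
of the Furstenberg boundary. -/
structure IsExtremalMean (q : ℓ^∞(G, ℂ) →L[ℂ] ℂ) : Prop where
  isUnitalContractive : IsUnitalContractive q
  conv_conv : ∀ μ, IsUnitalContractive μ → conv (translation G) q (conv (translation G) μ q) = q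
  mem_extremePoints : q ∈ Set.extremePoints ℝ
    ((conv (translation G) · q) '' {μ | IsUnitalContractive μ})

/-- Convolution of functionals on `ℓ^∞(G)`, as a real bilinear map. -/
def convBilin : WeakDual ℂ ℓ^∞(G, ℂ) →ₗ[ℝ] WeakDual ℂ ℓ^∞(G, ℂ) →ₗ[ℝ] WeakDual ℂ ℓ^∞(G, ℂ) :=
  LinearMap.mk₂ ℝ
    (fun μ ν => StrongDual.toWeakDual
      (conv (translation G) (WeakDual.toStrongDual μ) (WeakDual.toStrongDual ν)))
    (fun _ _ _ => rfl) (fun _ _ _ => rfl)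
    (fun μ ν ν' => by
      refine DFunLike.ext _ _ fun f => ?_
      exact (congrArg μ (by ext g; rfl)).trans (map_add μ (poisson (translation G) ν f) _))
    (fun c μ ν => by
      refine DFunLike.ext _ _ fun f => ?_
      have h : poisson (translation G) (c • WeakDual.toStrongDual ν) f =
          (c : ℂ) • poisson (translation G) (WeakDual.toStrongDual ν) f := by
        ext g
        exact Complex.real_smul
      exact (congrArg μ h).trans (map_smul μ (c : ℂ) _))

/-- Evaluation at the identity, as a functional on `ℓ^∞(G)`. -/
def evalOne : ℓ^∞(G, ℂ) →L[ℂ] ℂ :=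
  LinearMap.mkContinuous
    { toFun f := f 1
      map_add' _ _ := rfl
      map_smul' _ _ := rfl } 1 fun f => (norm_linfty_apply_le f 1).trans_eq (one_mul _).symm

variable (G) in
theorem exists_isExtremalMean : ∃ q : ℓ^∞(G, ℂ) →L[ℂ] ℂ, IsExtremalMean q := by
  obtain ⟨q, hq, conv_conv, h_extreme⟩ := exists_extremal_of_compact_convex_semigroup
    (m := convBilin (G := G)) (isCompact_setOf_isUnitalContractive ℓ^∞(G, ℂ))
    (convex_setOf_isUnitalContractive ℓ^∞(G, ℂ))
    ⟨StrongDual.toWeakDual evalOne, rfl, fun f => norm_linfty_apply_le f 1⟩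
    (fun _ hμ _ hν => hμ.conv (translation G) hν) (fun _ _ _ => conv_assoc (translation G) _ _ _)
    (fun ν => WeakDual.continuous_of_continuous_eval fun f => WeakDual.eval_continuous _)
  exact ⟨WeakDual.toStrongDual q, hq, conv_conv, h_extreme⟩

end ExtremalMean

section Positivity

variable {X : Type*} {μ : ℓ^∞(X, ℂ) →L[ℂ] ℂ}

theorem IsUnitalContractive.nonneg_of_forall_nonneg (hμ : IsUnitalContractive μ) {f : ℓ^∞(X, ℂ)}
    (hf : ∀ x, 0 ≤ f x) : 0 ≤ μ f := by
  have bound (x : X) : ‖(√(f x).re : ℂ)‖ ≤ √‖f‖ := by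
    rw [Complex.norm_real, Real.norm_of_nonneg (Real.sqrt_nonneg _)]
    exact Real.sqrt_le_sqrt ((Complex.re_le_norm _).trans (norm_linfty_apply_le f x))
  set r := linftyOfBound (fun x => (√(f x).re : ℂ)) _ bound
  have eq_star_mul_self : f = star r * r := by
    ext x
    change f x = star (√(f x).re : ℂ) * (√(f x).re : ℂ)
    rw [Complex.star_def, Complex.conj_ofReal, ← Complex.ofReal_mul,
      Real.mul_self_sqrt (Complex.nonneg_iff.1 (hf x)).1]
    exact (Complex.eq_re_of_ofReal_le (hf x))
  exact eq_star_mul_self ▸ hμ.nonneg r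

theorem IsUnitalContractive.inv_smul_comp_mul (hμ : IsUnitalContractive μ) {c : ℓ^∞(X, ℂ)}
    (hc : ∀ x, 0 ≤ c x) {t : ℝ} (ht : 0 < t) (hμc : μ c = t) :
    IsUnitalContractive (t⁻¹ • μ.comp (ContinuousLinearMap.mul ℂ ℓ^∞(X, ℂ) c)) := by
  refine isUnitalContractive_of_nonneg ?_ fun a => ?_
  · change t⁻¹ • μ (c * 1) = 1
    rw [mul_one, hμc, Complex.real_smul, ← Complex.ofReal_mul, inv_mul_cancel₀ ht.ne',
      Complex.ofReal_one]
  · exact smul_nonneg (inv_nonneg.2 ht.le) <| hμ.nonneg_of_forall_nonneg fun x =>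
      mul_nonneg (hc x) (star_mul_self_nonneg (a x))

end Positivity

section Multiplicativity

variable {q μ : ℓ^∞(G, ℂ) →L[ℂ] ℂ}

theorem IsExtremalMean.map_mul_poisson_of_mem_Ioo (hq : IsExtremalMean q)
    (hμ : IsUnitalContractive μ) (hμq : conv (translation G) μ q = q) {c : ℓ^∞(G, ℂ)}
    (hc : ∀ x, 0 ≤ c x) (hc' : ∀ x, 0 ≤ (1 - c : ℓ^∞(G, ℂ)) x) {t : ℝ} (ht : t ∈ Set.Ioo 0 1)
    (hμc : μ c = t) (f : ℓ^∞(G, ℂ)) : μ (c * poisson (translation G) q f) = μ c * q f := by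
  obtain ⟨ht0, ht1⟩ : 0 < t ∧ 0 < 1 - t := ⟨ht.1, sub_pos.2 ht.2⟩
  have hμc' : μ (1 - c) = (1 - t : ℝ) := by rw [map_sub, hμ.map_one, hμc]; push_cast; rfl
  set ν := t⁻¹ • μ.comp (ContinuousLinearMap.mul ℂ ℓ^∞(G, ℂ) c)
  set ν' := (1 - t)⁻¹ • μ.comp (ContinuousLinearMap.mul ℂ ℓ^∞(G, ℂ) (1 - c))
  have hν : IsUnitalContractive ν := hμ.inv_smul_comp_mul hc ht0 hμc
  have hν' : IsUnitalContractive ν' := hμ.inv_smul_comp_mul hc' ht1 hμc'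
  have decomposition : t • ν + (1 - t) • ν' = μ := by
    simp only [ν, ν', smul_inv_smul₀ ht0.ne', smul_inv_smul₀ ht1.ne']
    ext f
    change μ (c * f) + μ ((1 - c) * f) = μ f
    rw [← map_add, ← add_mul, add_sub_cancel, one_mul]
  have conv_mem_openSegment :
      q ∈ openSegment ℝ (conv (translation G) ν q) (conv (translation G) ν' q) :=
    ⟨t, 1 - t, ht0, ht1, add_sub_cancel _ _, by
      change conv (translation G) (t • ν + (1 - t) • ν') q = q
      rw [decomposition, hμq]⟩
  have conv_eq : conv (translation G) ν q = q :=
    (_root_.mem_extremePoints.1 hq.mem_extremePoints |>.2 _ ⟨ν, hν, rfl⟩ _ ⟨ν', hν', rfl⟩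
      conv_mem_openSegment).1
  have apply_eq : t⁻¹ • μ (c * poisson (translation G) q f) = q f := congr($conv_eq f)
  rw [hμc, ← Complex.real_smul, ← apply_eq, smul_inv_smul₀ ht0.ne']

theorem IsExtremalMean.map_mul_poisson_of_isSelfAdjoint (hq : IsExtremalMean q)
    (hμ : IsUnitalContractive μ) (hμq : conv (translation G) μ q = q) {c : ℓ^∞(G, ℂ)}
    (hc : IsSelfAdjoint c) (f : ℓ^∞(G, ℂ)) :
    μ (c * poisson (translation G) q f) = μ c * q f := by
  set s : ℝ := 1 / (4 * (‖c‖ + 1))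
  have hs : s ≠ 0 := by positivity
  have affine_mem_Ioo {z : ℂ} (hz : z.im = 0) (hzc : ‖z‖ ≤ ‖c‖) :
      ∃ r ∈ Set.Ioo (0 : ℝ) 1, (2⁻¹ + s * z : ℂ) = r := by
    have abs_mul_le : |s * z.re| ≤ 1 / 4 := by
      rw [abs_mul, abs_of_pos (by positivity : 0 < s), one_div_mul_eq_div,
        div_le_iff₀ (by positivity)]
      linarith [(Complex.abs_re_le_norm z).trans hzc]
    obtain ⟨lower, upper⟩ := abs_le.1 abs_mul_le
    refine ⟨2⁻¹ + s * z.re, ⟨by linarith, by linarith⟩, ?_⟩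
    apply Complex.ext <;> simp [hz]
  have affine_apply (x : G) :
      ((2⁻¹ : ℂ) • 1 + (s : ℂ) • c : ℓ^∞(G, ℂ)) x = 2⁻¹ + s * c x := by
    change 2⁻¹ * (1 : ℂ) + s * c x = 2⁻¹ + s * c x
    rw [mul_one]
  have affine_pointwise (x : G) := affine_mem_Ioo
    (Complex.conj_eq_iff_im.1 congr($hc x)) (norm_linfty_apply_le c x)
  obtain ⟨t, ht, hμt⟩ := affine_mem_Ioo (hμ.im_apply_eq_zero hc) (hμ.norm_apply_le c)
  have h := hq.map_mul_poisson_of_mem_Ioo hμ hμq (c := (2⁻¹ : ℂ) • 1 + (s : ℂ) • c) (t := t)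
    (fun x => by
      obtain ⟨r, hr, hxr⟩ := affine_pointwise x
      rw [affine_apply, hxr]
      exact Complex.zero_le_real.2 hr.1.le)
    (fun x => by
      obtain ⟨r, hr, hxr⟩ := affine_pointwise x
      change 0 ≤ 1 - ((2⁻¹ : ℂ) • 1 + (s : ℂ) • c : ℓ^∞(G, ℂ)) x
      rw [affine_apply, hxr, sub_nonneg]
      exact (Complex.real_le_real.2 hr.2.le).trans_eq Complex.ofReal_one)
    ht (by simp [hμ.map_one, hμt]) f
  have map_poisson : μ (poisson (translation G) q f) = q f := congr($hμq f)
  simp only [add_mul, smul_mul_assoc, one_mul, map_add, map_smul, hμ.map_one, map_poisson,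
    smul_eq_mul, mul_one, add_right_inj] at h
  exact mul_left_cancel₀ (Complex.ofReal_ne_zero.2 hs) (h.trans (mul_assoc _ _ _))

theorem IsExtremalMean.map_mul_poisson (hq : IsExtremalMean q) (hμ : IsUnitalContractive μ)
    (hμq : conv (translation G) μ q = q) (c f : ℓ^∞(G, ℂ)) :
    μ (c * poisson (translation G) q f) = μ c * q f := by
  rw [← realPart_add_I_smul_imaginaryPart c, add_mul, smul_mul_assoc, map_add, map_add, map_smul,
    map_smul, hq.map_mul_poisson_of_isSelfAdjoint hμ hμq (realPart c).2,
    hq.map_mul_poisson_of_isSelfAdjoint hμ hμq (imaginaryPart c).2, smul_eq_mul, smul_eq_mul,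
    add_mul, mul_assoc]

end Multiplicativity

section MultiplicativeDomain

variable {B : Type*} [CStarAlgebra B] {α : G →* (B ≃⋆ₐ[ℂ] B)} {q : ℓ^∞(G, ℂ) →L[ℂ] ℂ}
  {ω : B →L[ℂ] ℂ} {N : ℓ^∞(G, ℂ) →⋆ₐ[ℂ] B}

theorem IsExtremalMean.conv_map_poisson (hq : IsExtremalMean q) (hω : IsUnitalContractive ω)
    (hN : ∀ g f, α g (N (poisson (translation G) q f)) =
      N (poisson (translation G) q (translation G g f))) (f : ℓ^∞(G, ℂ)) :
    conv α q ω (N (poisson (translation G) q f)) = q f := by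
  refine .trans (congrArg q ?_) congr($(hq.conv_conv _ (hω.comp_starAlgHom N)) f)
  ext g
  exact congrArg ω (hN g⁻¹ f)

theorem IsExtremalMean.conv_star_mul_map_poisson (hq : IsExtremalMean q)
    (hω : IsUnitalContractive ω)
    (hN : ∀ g f, α g (N (poisson (translation G) q f)) =
      N (poisson (translation G) q (translation G g f))) (f : ℓ^∞(G, ℂ)) :
    conv α q ω (N (star (poisson (translation G) q f) * poisson (translation G) q f)) =
      star (q f) * q f := by
  have hμ := (hq.isUnitalContractive.conv α hω).comp_starAlgHom N
  have h := hq.map_mul_poisson hμ (by ext f; exact hq.conv_map_poisson hω hN f)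
    (star (poisson (translation G) q f)) f
  rw [hμ.map_star] at h
  exact h.trans (congrArg (star · * q f) (hq.conv_map_poisson hω hN f))

theorem IsExtremalMean.conv_mul_map_poisson (hq : IsExtremalMean q) (hω : IsUnitalContractive ω)
    (hN : ∀ g f, α g (N (poisson (translation G) q f)) =
      N (poisson (translation G) q (translation G g f))) (f : ℓ^∞(G, ℂ)) (T : B) :
    conv α q ω (T * N (poisson (translation G) q f)) = conv α q ω T * q f := by
  rw [(hq.isUnitalContractive.conv α hω).map_mul_eq_mul_of_map_star_mul_self,
    hq.conv_map_poisson hω hN]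
  rw [← map_star, ← map_mul, hq.conv_star_mul_map_poisson hω hN, hq.conv_map_poisson hω hN]

theorem IsExtremalMean.conv_map_poisson_mul (hq : IsExtremalMean q) (hω : IsUnitalContractive ω)
    (hN : ∀ g f, α g (N (poisson (translation G) q f)) =
      N (poisson (translation G) q (translation G g f))) (f : ℓ^∞(G, ℂ)) (T : B) :
    conv α q ω (N (poisson (translation G) q f) * T) = q f * conv α q ω T := by
  rw [(hq.isUnitalContractive.conv α hω).map_mul_eq_mul_of_map_mul_star_self,
    hq.conv_map_poisson hω hN]
  rw [← map_star, ← map_mul, mul_comm, hq.conv_star_mul_map_poisson hω hN,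
    hq.conv_map_poisson hω hN, mul_comm]

end MultiplicativeDomain

/-! ### Permutation representations -/

section Reindexing

variable {X Y : Type*} {p : ℝ≥0∞}

theorem memℓp_comp_equiv (σ : Y ≃ X) {f : X → ℂ} (hf : Memℓp f p) : Memℓp (f ∘ σ) p := by
  rcases p.trichotomy with rfl | rfl | hp
  · exact memℓp_zero (hf.finite_dsupport.preimage σ.injective.injOn)
  · exact memℓp_infty ((σ.surjective.range_comp (‖f ·‖)).symm ▸ hf.bddAbove)
  · exact memℓp_gen (σ.summable_iff.2 (hf.summable hp))

variable (p) in
/-- Reindexing of `ℓ^p(X)` along a bijection `σ`, `f ↦ f ∘ σ⁻¹`. -/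
def lpReindex [Fact (1 ≤ p)] (σ : X ≃ Y) :
    lp (fun _ : X => ℂ) p ≃ₗᵢ[ℂ] lp (fun _ : Y => ℂ) p where
  toFun f := ⟨f ∘ σ.symm, memℓp_comp_equiv σ.symm (lp.memℓp f)⟩
  invFun f := ⟨f ∘ σ, memℓp_comp_equiv σ (lp.memℓp f)⟩
  map_add' _ _ := rfl
  map_smul' _ _ := rfl
  left_inv f := by ext x; exact congrArg f (σ.symm_apply_apply x)
  right_inv f := by ext y; exact congrArg f (σ.apply_symm_apply y)
  norm_map' f := by
    rcases p.dichotomy with rfl | hp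
    · simp only [lp.norm_eq_ciSup]
      exact σ.symm.iSup_comp (g := (‖f ·‖))
    · have hp : 0 < p.toReal := by linarith
      simp only [lp.norm_eq_tsum_rpow hp]
      exact congrArg (· ^ _) (σ.symm.tsum_eq (‖f ·‖ ^ p.toReal))

@[simp] theorem lpReindex_apply [Fact (1 ≤ p)] (σ : X ≃ Y) (f : lp (fun _ : X => ℂ) p) (y : Y) :
    lpReindex p σ f y = f (σ.symm y) := rfl

theorem lpReindex_single [DecidableEq X] [DecidableEq Y] [Fact (1 ≤ p)] (σ : X ≃ Y) (x : X)
    (c : ℂ) : lpReindex p σ (lp.single p x c) = lp.single p (σ x) c := by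
  ext y
  simp [Pi.single_apply, σ.symm_apply_eq]

end Reindexing

section PermutationRepresentation

variable (Y : Type*)

/-- The representation of `ℓ^∞(Y)` on `ℓ²(Y)` by multiplication operators. -/
def multiplication : ℓ^∞(Y, ℂ) →⋆ₐ[ℂ] (ℓ²(Y, ℂ) →L[ℂ] ℓ²(Y, ℂ)) where
  toFun f := lp.holderL 2 (fun _ => ContinuousLinearMap.mul ℂ ℂ) (K := 1) (by simp) f
  map_one' := by ext ξ y; exact one_mul _
  map_mul' f f' := by ext ξ y; exact mul_assoc _ _ _
  map_zero' := map_zero _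
  map_add' := map_add _
  commutes' c := by ext ξ y; rfl
  map_star' f := by
    refine (ContinuousLinearMap.eq_adjoint_iff _ _).2 fun ξ η => ?_
    rw [lp.inner_eq_tsum, lp.inner_eq_tsum]
    refine tsum_congr fun y => ?_
    change inner ℂ (star (f y) * ξ y) (η y) = inner ℂ (ξ y) (f y * η y)
    simp only [RCLike.inner_apply, map_mul, Complex.star_def, Complex.conj_conj]
    ring

instance nontrivial_l2 [Nonempty Y] : Nontrivial ℓ²(Y, ℂ) := by
  classical
  obtain ⟨y⟩ := ‹Nonempty Y›
  refine ⟨lp.single 2 y 1, 0, fun h => one_ne_zero (α := ℂ) ?_⟩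
  rw [← lp.single_apply_self (E := fun _ : Y => ℂ) 2 y 1, h]
  rfl

variable [MulAction G Y]

variable (G) in
/-- The permutation representation of `G` on `ℓ²(Y)`, `(g · ξ)(y) = ξ(g⁻¹ y)`. -/
def permutation : G →* unitary (ℓ²(Y, ℂ) →L[ℂ] ℓ²(Y, ℂ)) :=
  Unitary.linearIsometryEquiv.symm.toMonoidHom.comp
    { toFun g := lpReindex 2 (MulAction.toPerm g)
      map_one' := by ext ξ y; simp
      map_mul' g h := by ext ξ (y : Y); simp [mul_smul] }

variable {Y} in
theorem permutation_single [DecidableEq Y] (g : G) (y : Y) (c : ℂ) :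
    (permutation G Y g : ℓ²(Y, ℂ) →L[ℂ] ℓ²(Y, ℂ)) (lp.single 2 y c) = lp.single 2 (g • y) c :=
  lpReindex_single (MulAction.toPerm g) y c

variable (G) in
/-- The action of `G` on the bounded operators on `ℓ²(Y)` by conjugation. -/
def conjugation : G →* ((ℓ²(Y, ℂ) →L[ℂ] ℓ²(Y, ℂ)) ≃⋆ₐ[ℂ] (ℓ²(Y, ℂ) →L[ℂ] ℓ²(Y, ℂ))) :=
  (Unitary.conjStarAlgAut ℂ _).comp (permutation G Y)

theorem permutation_mul (g : G) (T : ℓ²(Y, ℂ) →L[ℂ] ℓ²(Y, ℂ)) :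
    (permutation G Y g : ℓ²(Y, ℂ) →L[ℂ] ℓ²(Y, ℂ)) * T =
      conjugation G Y g T * permutation G Y g := by
  change _ = (permutation G Y g : ℓ²(Y, ℂ) →L[ℂ] ℓ²(Y, ℂ)) * T *
    star (permutation G Y g : ℓ²(Y, ℂ) →L[ℂ] ℓ²(Y, ℂ)) * permutation G Y g
  rw [mul_assoc, Unitary.star_mul_self_of_mem (permutation G Y g).2, mul_one]

theorem conjugation_permutation (g s : G) :
    conjugation G Y g (permutation G Y s) = permutation G Y (g * s * g⁻¹) := by
  rw [map_mul, map_mul, map_inv]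
  rfl

theorem permutation_mul_multiplication (g : G) (f : ℓ^∞(Y, ℂ)) :
    (permutation G Y g : ℓ²(Y, ℂ) →L[ℂ] ℓ²(Y, ℂ)) * multiplication Y f =
      multiplication Y (linftyComp (g⁻¹ • ·) f) * permutation G Y g := rfl

theorem conjugation_multiplication (g : G) (f : ℓ^∞(Y, ℂ)) :
    conjugation G Y g (multiplication Y f) = multiplication Y (linftyComp (g⁻¹ • ·) f) := by
  change (permutation G Y g : ℓ²(Y, ℂ) →L[ℂ] ℓ²(Y, ℂ)) * multiplication Y f *
    star (permutation G Y g : ℓ²(Y, ℂ) →L[ℂ] ℓ²(Y, ℂ)) = _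
  rw [permutation_mul_multiplication, mul_assoc, ← Unitary.coe_star, Unitary.coe_mul_star_self,
    mul_one]

end PermutationRepresentation

/-! ### The reduced group C⋆-algebra -/

section ReducedAlgebra

theorem isClosed_redCstar : IsClosed (redCstar G : Set (ℓ²(G, ℂ) →L[ℂ] ℓ²(G, ℂ))) := by
  rw [redCstar]
  exact StarSubalgebra.isClosed_topologicalClosure _

attribute [local instance] isClosed_redCstar

theorem lreg_eq_permutation (g : G) : lreg g = permutation G G g := by
  ext ξ h
  rw [lreg, lregE]
  rfl

theorem coe_uu (g : G) : (uu g : ℓ²(G, ℂ) →L[ℂ] ℓ²(G, ℂ)) = permutation G G g := by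
  rw [uu, ← lreg_eq_permutation]

theorem uu_mul (g h : G) : uu (g * h) = uu g * uu h := Subtype.ext <| by
  simp only [coe_uu, map_mul, MulMemClass.coe_mul]

theorem uu_one : uu (1 : G) = 1 := Subtype.ext <| by
  simp only [coe_uu, map_one, OneMemClass.coe_one]

theorem star_uu (g : G) : star (uu g) = uu g⁻¹ := Subtype.ext <| by
  rw [StarMemClass.coe_star, coe_uu, coe_uu, ← Unitary.coe_star, Unitary.star_eq_inv, map_inv]

variable (G) in
/-- The left regular representation, as a homomorphism of the group algebra to `C*_λ(G)`. -/
def regularLift : MonoidAlgebra ℂ G →ₐ[ℂ] redCstar G :=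
  MonoidAlgebra.lift ℂ (redCstar G) G ⟨⟨uu, uu_one⟩, uu_mul⟩

theorem regularLift_of (g : G) : regularLift G (.of ℂ G g) = uu g :=
  MonoidAlgebra.lift_of _ g

theorem adjoin_range_lreg_le : (StarAlgebra.adjoin ℂ (Set.range (lreg (G := G)))).toSubalgebra ≤
    ((redCstar G).subtype.toAlgHom.comp (regularLift G)).range := by
  have lreg_mem (g : G) :
      lreg g ∈ ((redCstar G).subtype.toAlgHom.comp (regularLift G)).range := by
    refine ⟨.of ℂ G g, ?_⟩
    change (regularLift G (.of ℂ G g) : ℓ²(G, ℂ) →L[ℂ] ℓ²(G, ℂ)) = lreg g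
    rw [regularLift_of, coe_uu, lreg_eq_permutation]
  rw [StarAlgebra.adjoin_toSubalgebra, Algebra.adjoin_le_iff]
  rintro a (⟨g, rfl⟩ | ⟨g, hg⟩)
  · exact lreg_mem g
  · have h : a = lreg g⁻¹ := by
      rw [← star_star a, ← hg, lreg_eq_permutation, lreg_eq_permutation, map_inv,
        ← Unitary.coe_star, Unitary.star_eq_inv]
    exact h ▸ lreg_mem g⁻¹

variable (G) in
theorem denseRange_regularLift : DenseRange (regularLift G) := by
  refine Subtype.dense_iff.2 fun a ha => ?_
  rw [redCstar] at ha
  refine closure_mono (fun b hb => ?_) ha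
  obtain ⟨c, rfl⟩ := adjoin_range_lreg_le hb
  exact ⟨_, ⟨c, rfl⟩, rfl⟩

theorem redCstar_ext {F : Type*} [AddCommMonoid F] [Module ℂ F] [TopologicalSpace F] [T2Space F]
    {f g : redCstar G →L[ℂ] F} (h : ∀ s, f (uu s) = g (uu s)) : f = g := by
  have comp_eq : f.toLinearMap ∘ₗ (regularLift G).toLinearMap =
      g.toLinearMap ∘ₗ (regularLift G).toLinearMap := by
    refine MonoidAlgebra.lhom_ext' fun s => LinearMap.ext_ring ?_
    change f (regularLift G (.of ℂ G s)) = g (regularLift G (.of ℂ G s))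
    rw [regularLift_of, h]
  exact DFunLike.coe_injective <| (denseRange_regularLift G).equalizer f.continuous g.continuous <|
    funext fun c => congr($comp_eq c)

theorem IsState.isUnitalContractive {φ : WeakDual ℂ (redCstar G)} (hφ : IsState φ) :
    IsUnitalContractive (WeakDual.toStrongDual φ) :=
  isUnitalContractive_of_nonneg hφ.1 hφ.2

open Classical in
theorem tau_apply (a : redCstar G) :
    tau G a = (a : ℓ²(G, ℂ) →L[ℂ] ℓ²(G, ℂ)) (lp.single 2 1 1) 1 := by
  rw [tau, deltaOne]
  refine (lp.inner_single_left _ _ _).trans ?_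
  simp

open Classical in
theorem tau_uu (g : G) : tau G (uu g) = if g = 1 then 1 else 0 := by
  rw [tau_apply, coe_uu, permutation_single]
  simp [lp.single_apply, Pi.single_apply, eq_comm]

theorem tau_star_mul_self (a : redCstar G) :
    tau G (star a * a) = (‖(a : ℓ²(G, ℂ) →L[ℂ] ℓ²(G, ℂ)) deltaOne‖ ^ 2 : ℝ) := by
  rw [tau]
  push_cast
  rw [← Complex.coe_algebraMap, ← inner_self_eq_norm_sq_to_K (𝕜 := ℂ)]
  exact ContinuousLinearMap.adjoint_inner_right (a : ℓ²(G, ℂ) →L[ℂ] ℓ²(G, ℂ)) _ _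

variable (G) in
theorem isState_tau : IsState (tau G) :=
  ⟨by rw [← uu_one, tau_uu, if_pos rfl], fun a => by
    rw [tau_star_mul_self]
    exact Complex.zero_le_real.2 (sq_nonneg _)⟩

theorem eq_zero_of_forall_tau_eq_zero {x : redCstar G}
    (h : ∀ g, tau G (star (x * uu g) * (x * uu g)) = 0) : x = 0 := by
  classical
  refine Subtype.ext <| lp.ext_continuousLinearMap ENNReal.ofNat_ne_top fun g => ?_
  refine ContinuousLinearMap.ext_ring ?_
  have hg := h g
  rw [tau_star_mul_self, Complex.ofReal_eq_zero, sq_eq_zero_iff, norm_eq_zero, deltaOne] at hg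
  change (x : ℓ²(G, ℂ) →L[ℂ] ℓ²(G, ℂ)) ((uu g : ℓ²(G, ℂ) →L[ℂ] ℓ²(G, ℂ)) _) = 0 at hg
  rw [coe_uu, permutation_single, smul_eq_mul, mul_one] at hg
  exact hg

end ReducedAlgebra

section ProperIdeals

attribute [local instance] isClosed_redCstar

theorem one_le_dist_one_of_mem {A : Type*} [NormedRing A] [HasSummableGeomSeries A] {I : Ideal A}
    (hI : I ≠ ⊤) {x : A} (hx : x ∈ I) : 1 ≤ dist 1 x := by
  by_contra! hlt
  have isUnit : IsUnit x := by
    by_contra h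
    exact nonunits.subset_compl_ball h (by rwa [Metric.mem_ball, dist_comm])
  exact hI (I.eq_top_of_isUnit_mem hx isUnit)

theorem exists_isUnitalContractive_of_ne_top {A : Type*} [CStarAlgebra A] {I : Ideal A}
    (hI : I ≠ ⊤) : ∃ χ : A →L[ℂ] ℂ, IsUnitalContractive χ ∧ ∀ x ∈ I, χ x = 0 := by
  let J := I.restrictScalars ℂ
  have norm_mk_one : ‖(J.mkQL 1 : A ⧸ J)‖ = 1 := by
    have _ : Nontrivial A := (Submodule.nontrivial_iff A).1 ⟨⟨I, ⊤, hI⟩⟩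
    refine le_antisymm ((Submodule.Quotient.norm_mk_le J 1).trans_eq norm_one) ?_
    refine le_of_le_of_eq ((Metric.le_infDist J.nonempty).2 fun x hx => ?_)
      (QuotientAddGroup.norm_mk (S := J.toAddSubgroup) 1).symm
    exact one_le_dist_one_of_mem hI hx
  obtain ⟨g, norm_g, hg⟩ :=
    exists_dual_vector ℂ (J.mkQL 1 : A ⧸ J) (norm_mk_one.trans_ne one_ne_zero)
  refine ⟨g.comp J.mkQL, ⟨?_, fun a => ?_⟩, fun x hx => ?_⟩
  · exact hg.trans (by rw [norm_mk_one]; exact Complex.ofReal_one)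
  · calc ‖g (J.mkQL a)‖ ≤ ‖(J.mkQL a : A ⧸ J)‖ := by simpa [norm_g] using g.le_opNorm (J.mkQL a)
      _ ≤ ‖a‖ := Submodule.Quotient.norm_mk_le J a
  · have h : J.mkQL x = 0 := (Submodule.Quotient.mk_eq_zero J).2 hx
    rw [ContinuousLinearMap.comp_apply, h, map_zero]

theorem convex_setOf_apply_eq_zero {E : Type*} [AddCommMonoid E] [Module ℂ E]
    [TopologicalSpace E] (x : E) : Convex ℝ {ψ : WeakDual ℂ E | ψ x = 0} := by
  intro ψ hψ θ hθ s t _ _ _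
  calc (s • ψ + t • θ) x = s • ψ x + t • θ x := rfl
    _ = s • 0 + t • 0 := congrArg₂ (s • · + t • ·) hψ hθ
    _ = 0 := by simp

theorem apply_eq_zero_of_mem_closure_convexHull {E : Type*} [AddCommMonoid E] [Module ℂ E]
    [TopologicalSpace E] {S : Set (WeakDual ℂ E)} {x : E} (hS : ∀ ψ ∈ S, ψ x = 0)
    {ψ : WeakDual ℂ E} (hψ : ψ ∈ closure (convexHull ℝ S)) : ψ x = 0 := by
  have hull_subset : convexHull ℝ S ⊆ {ψ | ψ x = 0} :=
    convexHull_min hS (convex_setOf_apply_eq_zero x)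
  exact closure_minimal hull_subset
    (isClosed_eq (WeakDual.eval_continuous x) continuous_const) hψ

theorem isCstarSimple_of_forall_tau_mem_closure_convexHull
    (h : ∀ φ : WeakDual ℂ (redCstar G), IsState φ →
      tau G ∈ closure (convexHull ℝ {ψ : WeakDual ℂ (redCstar G) | ∃ g : G, ψ = dualAct g φ})) :
    IsCstarSimple G := by
  refine fun I _ => or_iff_not_imp_right.2 fun hI => ?_
  have asIdeal_ne_top : I.asIdeal ≠ ⊤ := fun htop => hI <|
    I.one_mem_iff.1 (TwoSidedIdeal.mem_asIdeal.1 (htop ▸ Submodule.mem_top))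
  obtain ⟨χ, hχ, hχI⟩ := exists_isUnitalContractive_of_ne_top asIdeal_ne_top
  have tau_eq_zero (x) (hx : x ∈ I) : tau G x = 0 := by
    refine apply_eq_zero_of_mem_closure_convexHull ?_
      (h (StrongDual.toWeakDual χ) ⟨hχ.map_one, hχ.nonneg⟩)
    rintro _ ⟨g, rfl⟩
    exact hχI _ (I.mul_mem_right _ _ (I.mul_mem_left _ _ hx))
  exact eq_bot_iff.2 fun x hx => eq_zero_of_forall_tau_eq_zero fun g =>
    tau_eq_zero _ (I.mul_mem_left _ _ (I.mul_mem_right _ _ hx))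

end ProperIdeals

/-! ### Reiter's condition -/

section HahnBanach

theorem IsUnitalContractive.re_apply_le {X : Type*} {q : ℓ^∞(X, ℂ) →L[ℂ] ℂ}
    (hq : IsUnitalContractive q) {u : ℓ^∞(X, ℂ)} {r : ℝ} (hu : ∀ x, (u x).re ≤ r) :
    (q u).re ≤ r := by
  have h : 0 ≤ q ((2 * r : ℂ) • 1 - (u + star u)) := hq.nonneg_of_forall_nonneg fun x => by
    change 0 ≤ (2 * r : ℂ) * 1 - (u x + star (u x))
    rw [Complex.star_def, Complex.add_conj, mul_one, sub_nonneg]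
    exact_mod_cast mul_le_mul_of_nonneg_left (hu x) zero_le_two
  rw [map_sub, map_add, hq.map_star, map_smul, hq.map_one, smul_eq_mul, mul_one,
    Complex.star_def, Complex.add_conj, sub_nonneg] at h
  exact le_of_mul_le_mul_left (by exact_mod_cast h) zero_lt_two

theorem mem_closure_convexHull_range {X E : Type*} [AddCommGroup E] [Module ℂ E]
    [TopologicalSpace E] [IsTopologicalAddGroup E] [ContinuousSMul ℂ E] [Module ℝ E]
    [IsScalarTower ℝ ℂ E] [LocallyConvexSpace ℝ E] {q : ℓ^∞(X, ℂ) →L[ℂ] ℂ}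
    (hq : IsUnitalContractive q) {v : X → E} {p : E}
    (h : ∀ Λ : E →L[ℂ] ℂ, ∃ u : ℓ^∞(X, ℂ), (∀ x, u x = Λ (v x)) ∧ q u = Λ p) :
    p ∈ closure (convexHull ℝ (Set.range v)) := by
  have _ : ContinuousSMul ℝ E := IsScalarTower.continuousSMul ℂ
  by_contra hp
  obtain ⟨Λ, c, hΛ, hc⟩ := RCLike.geometric_hahn_banach_closed_point (𝕜 := ℂ)
    (convex_convexHull ℝ (Set.range v)).closure isClosed_closure hp
  obtain ⟨u, hu, hqu⟩ := h Λ
  have re_le : (q u).re ≤ c := hq.re_apply_le fun x => by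
    rw [hu]
    exact (hΛ _ (subset_closure (subset_convexHull ℝ _ ⟨x, rfl⟩))).le
  rw [hqu] at re_le
  exact hc.not_ge re_le

end HahnBanach

section ProbabilityVectors

variable {X : Type*}

/-- The set of probability vectors in `ℓ¹(X)` supported in `T`. -/
def probabilityVectors (T : Set X) : Set ℓ¹(X, ℂ) :=
  {p | (∀ x, 0 ≤ p x) ∧ (∀ x ∉ T, p x = 0) ∧ lp.tsumCLM ℂ X ℂ p = 1}

theorem convex_probabilityVectors (T : Set X) : Convex ℝ (probabilityVectors T) := by
  rintro p ⟨p_nonneg, p_supp, p_sum⟩ p' ⟨p'_nonneg, p'_supp, p'_sum⟩ s t hs ht hst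
  refine ⟨fun x => ?_, fun x hx => ?_, ?_⟩
  · exact add_nonneg (smul_nonneg hs (p_nonneg x)) (smul_nonneg ht (p'_nonneg x))
  · change s • p x + t • p' x = 0
    rw [p_supp x hx, p'_supp x hx, smul_zero, smul_zero, add_zero]
  · change lp.tsumCLM ℂ X ℂ ((s : ℂ) • p + (t : ℂ) • p') = 1
    rw [map_add, map_smul, map_smul, p_sum, p'_sum, ← add_smul, ← Complex.ofReal_add, hst,
      Complex.ofReal_one, one_smul]

open Classical in
theorem single_mem_probabilityVectors {T : Set X} {x : X} (hx : x ∈ T) :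
    lp.single 1 x 1 ∈ probabilityVectors T := by
  refine ⟨fun y => ?_, fun y hy => ?_, ?_⟩
  · by_cases h : y = x <;> simp [h]
  · simp [(ne_of_mem_of_not_mem hx hy).symm]
  · simp [Pi.single_apply]

theorem hasSum_norm_l1 (p : ℓ¹(X, ℂ)) : HasSum (‖p ·‖) ‖p‖ := by
  simpa only [ENNReal.toReal_one, Real.rpow_one] using lp.hasSum_norm (by norm_num) p

theorem hasSum_norm_sq_l2 (ξ : ℓ²(X, ℂ)) : HasSum (‖ξ ·‖ ^ 2) (‖ξ‖ ^ 2) := by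
  simpa only [ENNReal.toReal_ofNat, Real.rpow_ofNat] using lp.hasSum_norm (by norm_num) ξ

theorem norm_eq_one_of_mem_probabilityVectors {T : Set X} {p : ℓ¹(X, ℂ)}
    (hp : p ∈ probabilityVectors T) : ‖p‖ = 1 := by
  have ofReal_norm (x : X) : (‖p x‖ : ℂ) = p x := Complex.eq_coe_norm_of_nonneg (hp.1 x) |>.symm
  have h : (‖p‖ : ℂ) = 1 := by
    rw [← hp.2.2, ← (hasSum_norm_l1 p).tsum_eq, Complex.ofReal_tsum]
    exact tsum_congr ofReal_norm
  exact_mod_cast h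

/-- The vector `√|p|` in `ℓ²(X)` obtained from `p ∈ ℓ¹(X)`. -/
def sqrtAbs (p : ℓ¹(X, ℂ)) : ℓ²(X, ℂ) :=
  ⟨fun x => (√‖p x‖ : ℂ), memℓp_gen (by
    simpa [abs_of_nonneg, Real.sq_sqrt] using (lp.memℓp p).summable (by norm_num))⟩

theorem norm_sqrtAbs_sq (p : ℓ¹(X, ℂ)) : ‖sqrtAbs p‖ ^ 2 = ‖p‖ := by
  refine (hasSum_norm_sq_l2 (sqrtAbs p)).unique ((hasSum_norm_l1 p).congr_fun fun x => ?_)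
  change ‖(√‖p x‖ : ℂ)‖ ^ 2 = ‖p x‖
  rw [Complex.norm_real, Real.norm_of_nonneg (Real.sqrt_nonneg _), Real.sq_sqrt (norm_nonneg _)]

theorem sq_sqrt_sub_sqrt_le {a b : ℝ} (ha : 0 ≤ a) (hb : 0 ≤ b) : (√a - √b) ^ 2 ≤ |a - b| := by
  calc (√a - √b) ^ 2 = |√a - √b| * |√a - √b| := by rw [← sq, sq_abs]
    _ ≤ |√a - √b| * |√a + √b| := by
      refine mul_le_mul_of_nonneg_left (le_abs.2 (.inl ?_)) (abs_nonneg _)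
      exact abs_le.2 ⟨by linarith [Real.sqrt_nonneg a], by linarith [Real.sqrt_nonneg b]⟩
    _ = |a - b| := by
      rw [← abs_mul, mul_comm, ← sq_sub_sq, Real.sq_sqrt ha, Real.sq_sqrt hb]

theorem norm_sqrtAbs_sub_sq_le (p p' : ℓ¹(X, ℂ)) :
    ‖sqrtAbs p - sqrtAbs p'‖ ^ 2 ≤ ‖p - p'‖ := by
  refine hasSum_le (fun x => ?_) (hasSum_norm_sq_l2 _) (hasSum_norm_l1 _)
  change ‖(√‖p x‖ - √‖p' x‖ : ℂ)‖ ^ 2 ≤ ‖p x - p' x‖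
  rw [← Complex.ofReal_sub, Complex.norm_real, Real.norm_eq_abs, sq_abs]
  exact (sq_sqrt_sub_sqrt_le (norm_nonneg _) (norm_nonneg _)).trans (abs_norm_sub_norm_le _ _)

end ProbabilityVectors

section Reiter

variable (H : Subgroup G)

/-- The component in `H` of `g` in the decomposition of `G` along representatives of the right
cosets of `H`; it is left `H`-equivariant. -/
def cosetComponent (g : G) : G := g * ((g⁻¹ : G) : G ⧸ H).out

theorem cosetComponent_mem (g : G) : cosetComponent H g ∈ H := by
  obtain ⟨h, hh⟩ := QuotientGroup.mk_out_eq_mul H g⁻¹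
  rw [cosetComponent, hh, mul_inv_cancel_left]
  exact h.2

variable {H} in
theorem cosetComponent_mul {h : G} (hh : h ∈ H) (g : G) :
    cosetComponent H (h * g) = h * cosetComponent H g := by
  have coset_eq : (((h * g)⁻¹ : G) : G ⧸ H) = (g⁻¹ : G) := by
    rw [QuotientGroup.eq]
    simpa using hh
  rw [cosetComponent, cosetComponent, coset_eq, mul_assoc]

open Classical in
theorem exists_linfty_apply_single (Λ : ℓ¹(G, ℂ) →L[ℂ] ℂ) :
    ∃ w : ℓ^∞(G, ℂ), ∀ g, w g = Λ (lp.single 1 (cosetComponent H g) 1) :=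
  ⟨linftyOfBound _ ‖Λ‖ fun g => (Λ.le_opNorm _).trans_eq <| by simp [lp.norm_single], fun _ => rfl⟩

/-- The vector `(s · p - p)_{s ∈ S}`, which measures how far `p ∈ ℓ¹(G)` is from being
`S`-invariant. -/
def displacement (S : Finset G) : ℓ¹(G, ℂ) →ₗ[ℝ] (S → ℓ¹(G, ℂ)) where
  toFun p s := lpReindex 1 (Equiv.mulLeft (s : G)) p - p
  map_add' p p' := by ext s x; exact add_sub_add_comm (p ((s : G)⁻¹ * x)) _ (p x) _
  map_smul' c p := by ext s x; exact (smul_sub c (p ((s : G)⁻¹ * x)) (p x)).symm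

variable {q : ℓ^∞(G, ℂ) →L[ℂ] ℂ} {H}

open Classical in
theorem zero_mem_closure_image_displacement (hq : IsUnitalContractive q)
    (hqH : ∀ s ∈ H, ∀ f, q (translation G s f) = q f) {S : Finset G} (hS : ∀ s ∈ S, s ∈ H) :
    0 ∈ closure (displacement S '' probabilityVectors (H : Set G)) := by
  let δ (g : G) : ℓ¹(G, ℂ) := lp.single 1 (cosetComponent H g) 1
  have hull_subset : convexHull ℝ (Set.range (displacement S ∘ δ)) ⊆
      displacement S '' probabilityVectors (H : Set G) := by
    rw [Set.range_comp, ← LinearMap.image_convexHull]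
    refine Set.image_mono (convexHull_min ?_ (convex_probabilityVectors _))
    rintro _ ⟨g, rfl⟩
    exact single_mem_probabilityVectors (cosetComponent_mem H g)
  refine closure_mono hull_subset (mem_closure_convexHull_range hq fun Λ => ?_)
  choose w hw using fun s : S =>
    exists_linfty_apply_single H (Λ.comp (ContinuousLinearMap.single ℂ (fun _ : S => ℓ¹(G, ℂ)) s))
  refine ⟨∑ s : S, (translation G (s : G)⁻¹ (w s) - w s), fun g => ?_, ?_⟩
  · have component (s : S) : (translation G (s : G)⁻¹ (w s) - w s) g =
        Λ (Pi.single s (displacement S (δ g) s)) := by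
      change w s ((s : G)⁻¹⁻¹ * g) - w s g = _
      rw [inv_inv, hw, hw, cosetComponent_mul (hS s s.2), ← map_sub]
      refine congrArg (fun p => Λ (Pi.single s p)) (congrArg (· - δ g) ?_)
      exact (lpReindex_single (Equiv.mulLeft (s : G)) _ _).symm
    rw [lp.coeFn_sum, Finset.sum_apply, Finset.sum_congr rfl fun s _ => component s, ← map_sum,
      Finset.univ_sum_single]
    rfl
  · rw [map_sum, map_zero]
    exact Finset.sum_eq_zero fun s _ => by
      rw [map_sub, hqH _ (H.inv_mem (hS s s.2)), sub_self]

theorem exists_unit_vector_almost_invariant (hq : IsUnitalContractive q)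
    (hqH : ∀ s ∈ H, ∀ f, q (translation G s f) = q f) {S : Finset G} (hS : ∀ s ∈ S, s ∈ H)
    {ε : ℝ} (hε : 0 < ε) :
    ∃ ξ : ℓ²(G, ℂ), ‖ξ‖ = 1 ∧ (∀ g ∉ H, ξ g = 0) ∧
      ∀ s ∈ S, ‖(permutation G G s : ℓ²(G, ℂ) →L[ℂ] ℓ²(G, ℂ)) ξ - ξ‖ < ε := by
  obtain ⟨_, ⟨p, hp, rfl⟩, dist_lt⟩ := Metric.mem_closure_iff.1
    (zero_mem_closure_image_displacement hq hqH hS) (ε ^ 2) (by positivity)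
  refine ⟨sqrtAbs p, ?_, fun g hg => ?_, fun s hs => ?_⟩
  · rw [← pow_eq_one_iff_of_nonneg (norm_nonneg _) two_ne_zero, norm_sqrtAbs_sq,
      norm_eq_one_of_mem_probabilityVectors hp]
  · change (√‖p g‖ : ℂ) = 0
    rw [hp.2.1 g hg, norm_zero, Real.sqrt_zero, Complex.ofReal_zero]
  · refine lt_of_pow_lt_pow_left₀ 2 hε.le (lt_of_le_of_lt ?_ dist_lt)
    rw [dist_zero_left]
    refine (norm_sqrtAbs_sub_sq_le (lpReindex 1 (Equiv.mulLeft s) p) p).trans ?_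
    exact norm_le_pi_norm (displacement S p) ⟨s, hs⟩

theorem exists_tendsto_almost_invariant (hq : IsUnitalContractive q)
    (hqH : ∀ s ∈ H, ∀ f, q (translation G s f) = q f) :
    ∃ ξ : Finset H × ℕ → ℓ²(G, ℂ), (∀ i, ‖ξ i‖ = 1) ∧ (∀ i, ∀ g ∉ H, ξ i g = 0) ∧
      ∀ s ∈ H, Filter.Tendsto
        (fun i => ‖(permutation G G s : ℓ²(G, ℂ) →L[ℂ] ℓ²(G, ℂ)) (ξ i) - ξ i‖)
        Filter.atTop (nhds 0) := by
  classical
  choose ξ norm_ξ ξ_supp ξ_lt using fun i : Finset H × ℕ =>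
    exists_unit_vector_almost_invariant hq hqH (S := i.1.image (↑))
      (by simp +contextual) (Nat.one_div_pos_of_nat (α := ℝ) (n := i.2))
  refine ⟨ξ, norm_ξ, ξ_supp, fun s hs => ?_⟩
  rw [← Filter.prod_atTop_atTop_eq]
  refine squeeze_zero' (.of_forall fun _ => norm_nonneg _) ?_
    (tendsto_one_div_add_atTop_nhds_zero_nat.comp Filter.tendsto_snd)
  filter_upwards [Filter.tendsto_fst.eventually (Filter.eventually_ge_atTop {⟨s, hs⟩})] with i hi
  exact (ξ_lt i s (Finset.mem_image_of_mem _ (hi (Finset.mem_singleton_self _)))).le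

end Reiter

/-! ### Weak containment of the quasi-regular representation -/

section WeakContainment

variable {K : Type*} [NormedAddCommGroup K] [InnerProductSpace ℂ K] [CompleteSpace K]

/-- The linear extension of a unitary representation of `G` to the group algebra. -/
def groupAlgebraLift (π : G →* unitary (K →L[ℂ] K)) : MonoidAlgebra ℂ G →ₐ[ℂ] (K →L[ℂ] K) :=
  MonoidAlgebra.lift ℂ (K →L[ℂ] K) G ((unitary (K →L[ℂ] K)).subtype.comp π)

theorem groupAlgebraLift_single (π : G →* unitary (K →L[ℂ] K)) (g : G) (c : ℂ) :
    groupAlgebraLift π (.single g c) = c • (π g : K →L[ℂ] K) :=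
  MonoidAlgebra.lift_single _ g c

variable {H : Subgroup G} {π : G →* unitary (K →L[ℂ] K)}

theorem unitary_map_mul_apply (π : G →* unitary (K →L[ℂ] K)) (g h : G) (ξ : K) :
    (π (g * h) : K →L[ℂ] K) ξ = (π g : K →L[ℂ] K) ((π h : K →L[ℂ] K) ξ) := by
  rw [map_mul]
  rfl

theorem orthonormal_coset_translates {ξ : K} (norm_ξ : ‖ξ‖ = 1)
    (inner_ξ : ∀ t ∉ H, inner ℂ ξ ((π t : K →L[ℂ] K) ξ) = 0) :
    Orthonormal ℂ fun y : G ⧸ H => (π y.out : K →L[ℂ] K) ξ := by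
  refine ⟨fun y => (Unitary.norm_map _ _).trans norm_ξ, fun y z hyz => ?_⟩
  have h : (y.out)⁻¹ * z.out ∉ H := fun h => hyz <| by
    rw [← QuotientGroup.eq, QuotientGroup.out_eq', QuotientGroup.out_eq'] at h
    exact h
  have mul_eq : (π z.out : K →L[ℂ] K) ξ =
      (π y.out : K →L[ℂ] K) ((π ((y.out)⁻¹ * z.out) : K →L[ℂ] K) ξ) := by
    rw [← unitary_map_mul_apply, mul_inv_cancel_left]
  change inner ℂ _ ((π z.out : K →L[ℂ] K) ξ) = 0
  rw [mul_eq, Unitary.inner_map_map, inner_ξ _ h]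

theorem norm_coset_translate_sub (ξ : K) (s : G) (y : G ⧸ H) :
    ‖(π s : K →L[ℂ] K) ((π y.out : K →L[ℂ] K) ξ) - (π (s • y).out : K →L[ℂ] K) ξ‖ =
      ‖(π ((s • y).out⁻¹ * (s * y.out)) : K →L[ℂ] K) ξ - ξ‖ := by
  rw [← Unitary.norm_map (π (s • y).out) (_ - ξ), map_sub]
  rw [← unitary_map_mul_apply, ← unitary_map_mul_apply, mul_inv_cancel_left]

theorem out_inv_mul_mem (s : G) (y : G ⧸ H) : (s • y).out⁻¹ * (s * y.out) ∈ H := by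
  rw [← QuotientGroup.eq, QuotientGroup.out_eq', ← smul_eq_mul, MulAction.Quotient.coe_smul_out]

open Classical in
theorem tendsto_intertwining_defect {ι : Type*} {l : Filter ι}
    {V : ι → ℓ²(G ⧸ H, ℂ) →L[ℂ] K}
    (hV : ∀ s y, Filter.Tendsto (fun i => (π s : K →L[ℂ] K) (V i (lp.single 2 y 1)) -
      V i (lp.single 2 (s • y) 1)) l (nhds 0)) (c : MonoidAlgebra ℂ G)
    (S : Finset (G ⧸ H)) (a : G ⧸ H → ℂ) :
    Filter.Tendsto (fun i => groupAlgebraLift π c (V i (∑ y ∈ S, lp.single 2 y (a y))) -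
      V i (groupAlgebraLift (permutation G (G ⧸ H)) c (∑ y ∈ S, lp.single 2 y (a y)))) l
      (nhds 0) := by
  suffices h : ∀ y ∈ S, Filter.Tendsto
      (fun i => groupAlgebraLift π c (V i (lp.single 2 y (a y))) -
        V i (groupAlgebraLift (permutation G (G ⧸ H)) c (lp.single 2 y (a y)))) l (nhds 0) by
    simpa only [map_sum, ← Finset.sum_sub_distrib, Finset.sum_const_zero]
      using tendsto_finsetSum S h
  intro y _
  have single_eq (z : G ⧸ H) : lp.single (E := fun _ => ℂ) 2 z (a y) =
      a y • lp.single (E := fun _ => ℂ) 2 z (1 : ℂ) := by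
    rw [← lp.single_smul, smul_eq_mul, mul_one]
  induction c using MonoidAlgebra.induction_linear with
  | zero => simpa using tendsto_const_nhds
  | add c c' hc hc' => simpa [add_sub_add_comm] using hc.add hc'
  | single s r =>
    have h := ((hV s y).const_smul r).const_smul (a y)
    rw [← permutation_single] at h
    simpa [groupAlgebraLift_single, single_eq, smul_sub] using h

theorem norm_apply_le_of_tendsto {ι E F : Type*} [NormedAddCommGroup E] [NormedSpace ℂ E]
    [NormedAddCommGroup F] [NormedSpace ℂ F] {l : Filter ι} [l.NeBot] {V : ι → E →ₗᵢ[ℂ] F}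
    {T : F →L[ℂ] F} {S : E →L[ℂ] E} {η : E}
    (h : Filter.Tendsto (fun i => T (V i η) - V i (S η)) l (nhds 0)) : ‖S η‖ ≤ ‖T‖ * ‖η‖ := by
  have bound (i : ι) : ‖S η‖ ≤ ‖T‖ * ‖η‖ + ‖T (V i η) - V i (S η)‖ := by
    rw [← (V i).norm_map (S η), ← (V i).norm_map η, norm_sub_rev]
    exact (norm_le_norm_add_norm_sub' _ _).trans (add_le_add_left (T.le_opNorm _) _)
  simpa using ge_of_tendsto' (h.norm.const_add (‖T‖ * ‖η‖)) bound

theorem norm_groupAlgebraLift_permutation_le {ι : Type*} {l : Filter ι} [l.NeBot] {ξ : ι → K}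
    (norm_ξ : ∀ i, ‖ξ i‖ = 1)
    (inner_ξ : ∀ i, ∀ t ∉ H, inner ℂ (ξ i) ((π t : K →L[ℂ] K) (ξ i)) = 0)
    (tendsto_ξ : ∀ s ∈ H, Filter.Tendsto (fun i => ‖(π s : K →L[ℂ] K) (ξ i) - ξ i‖) l (nhds 0))
    (c : MonoidAlgebra ℂ G) :
    ‖groupAlgebraLift (permutation G (G ⧸ H)) c‖ ≤ ‖groupAlgebraLift π c‖ := by
  classical
  let orth (i : ι) := (orthonormal_coset_translates (norm_ξ i) (inner_ξ i)).orthogonalFamily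
  let V (i : ι) : ℓ²(G ⧸ H, ℂ) →ₗᵢ[ℂ] K := (orth i).linearIsometry
  have V_single (i : ι) (y : G ⧸ H) : V i (lp.single 2 y 1) = (π y.out : K →L[ℂ] K) (ξ i) :=
    ((orth i).linearIsometry_apply_single 1).trans (one_smul ℂ _)
  refine ContinuousLinearMap.opNorm_le_bound _ (norm_nonneg _) fun η => ?_
  have isClosed_bound : IsClosed {η : ℓ²(G ⧸ H, ℂ) |
      ‖groupAlgebraLift (permutation G (G ⧸ H)) c η‖ ≤ ‖groupAlgebraLift π c‖ * ‖η‖} :=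
    isClosed_le (by fun_prop) (by fun_prop)
  refine isClosed_bound.mem_of_tendsto (lp.hasSum_single (by norm_num) η) (.of_forall fun S => ?_)
  refine norm_apply_le_of_tendsto (l := l) (V := V) (tendsto_intertwining_defect
    (V := fun i => (V i).toContinuousLinearMap) (fun s y => ?_) c S η)
  rw [tendsto_zero_iff_norm_tendsto_zero]
  refine (tendsto_ξ _ (out_inv_mul_mem s y)).congr fun i => ?_
  simp only [LinearIsometry.coe_toContinuousLinearMap, V_single]
  exact (norm_coset_translate_sub (ξ i) s y).symm

end WeakContainment

section QuasiRegular

variable {K : Type*} [NormedAddCommGroup K] [InnerProductSpace ℂ K] [CompleteSpace K]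

theorem coe_regularLift (c : MonoidAlgebra ℂ G) :
    (regularLift G c : ℓ²(G, ℂ) →L[ℂ] ℓ²(G, ℂ)) = groupAlgebraLift (permutation G G) c := by
  have h : (redCstar G).subtype.toAlgHom.comp (regularLift G) =
      groupAlgebraLift (permutation G G) := by
    refine MonoidAlgebra.algHom_ext (fun g => ?_) (Subsingleton.elim _ _)
    change (regularLift G (.of ℂ G g) : ℓ²(G, ℂ) →L[ℂ] ℓ²(G, ℂ)) = _
    rw [regularLift_of, coe_uu, groupAlgebraLift_single, one_smul]
  exact congr($h c)

theorem exists_starAlgHom_uu_eq {σ : G →* unitary (K →L[ℂ] K)}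
    (hσ : ∀ c, ‖groupAlgebraLift σ c‖ ≤ ‖groupAlgebraLift (permutation G G) c‖) :
    ∃ π : redCstar G →⋆ₐ[ℂ] (K →L[ℂ] K), ∀ g, π (uu g) = σ g := by
  let π : redCstar G →L[ℂ] (K →L[ℂ] K) :=
    (groupAlgebraLift σ).toLinearMap.extendOfNorm (regularLift G).toLinearMap
  have bound : ∃ C, ∀ c, ‖groupAlgebraLift σ c‖ ≤ C * ‖regularLift G c‖ :=
    ⟨1, fun c => (hσ c).trans_eq <| by rw [one_mul, ← coe_regularLift]; rfl⟩
  have π_uu (g : G) : π (uu g) = σ g := by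
    rw [← regularLift_of]
    refine (LinearMap.extendOfNorm_eq (denseRange_regularLift G) bound _).trans ?_
    exact (groupAlgebraLift_single σ g 1).trans (one_smul ℂ _)
  have π_mul_uu (g : G) : π ∘L (ContinuousLinearMap.mul ℂ (redCstar G)).flip (uu g) =
      (ContinuousLinearMap.mul ℂ (K →L[ℂ] K)).flip (σ g : K →L[ℂ] K) ∘L π :=
    redCstar_ext fun h => by simp [← uu_mul, π_uu]
  have π_mul (a b : redCstar G) : π (a * b) = π a * π b := by
    have h : π ∘L ContinuousLinearMap.mul ℂ (redCstar G) a =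
        ContinuousLinearMap.mul ℂ (K →L[ℂ] K) (π a) ∘L π :=
      redCstar_ext fun g => by simpa [π_uu] using congr($(π_mul_uu g) a)
    exact congr($h b)
  have π_star (a : redCstar G) : π (star a) = star (π a) := by
    have h : ((starL ℂ : (K →L[ℂ] K) ≃L⋆[ℂ] (K →L[ℂ] K)) : (K →L[ℂ] K) →L⋆[ℂ] (K →L[ℂ] K)).comp
        (π.comp ((starL ℂ : redCstar G ≃L⋆[ℂ] redCstar G) : redCstar G →L⋆[ℂ] redCstar G)) = π :=
      redCstar_ext fun g => by
        simp [star_uu, π_uu, ← Unitary.coe_star, Unitary.star_eq_inv]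
    exact (star_eq_iff_star_eq.2 congr($h a)).symm
  have π_one : π 1 = 1 := by rw [← uu_one, π_uu, map_one, OneMemClass.coe_one]
  exact ⟨{ AlgHom.ofLinearMap π.toLinearMap π_one π_mul with map_star' := π_star }, π_uu⟩

variable {H : Subgroup G} {q : ℓ^∞(G, ℂ) →L[ℂ] ℂ}

theorem inner_permutation_eq_zero {ξ : ℓ²(G, ℂ)} (hξ : ∀ g ∉ H, ξ g = 0) {t : G} (ht : t ∉ H) :
    inner ℂ ξ ((permutation G G t : ℓ²(G, ℂ) →L[ℂ] ℓ²(G, ℂ)) ξ) = 0 := by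
  rw [lp.inner_eq_tsum]
  refine (tsum_congr fun g => ?_).trans tsum_zero
  by_cases hg : g ∈ H
  · have translate_zero : (permutation G G t : ℓ²(G, ℂ) →L[ℂ] ℓ²(G, ℂ)) ξ g = 0 :=
      hξ _ fun h => ht (inv_mem_iff.1 ((H.mul_mem_cancel_right hg).1 h))
    rw [translate_zero, inner_zero_right]
  · rw [hξ g hg, inner_zero_left]

theorem exists_starAlgHom_uu_eq_permutation_quotient (hq : IsUnitalContractive q)
    (hqH : ∀ s ∈ H, ∀ f, q (translation G s f) = q f) :
    ∃ π : redCstar G →⋆ₐ[ℂ] (ℓ²(G ⧸ H, ℂ) →L[ℂ] ℓ²(G ⧸ H, ℂ)),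
      ∀ g, π (uu g) = permutation G (G ⧸ H) g := by
  classical
  obtain ⟨ξ, norm_ξ, ξ_supp, tendsto_ξ⟩ := exists_tendsto_almost_invariant hq hqH
  exact exists_starAlgHom_uu_eq <| norm_groupAlgebraLift_permutation_le norm_ξ
    (fun i _ ht => inner_permutation_eq_zero (ξ_supp i) ht) tendsto_ξ

end QuasiRegular

/-! ### Averages of states vanish off the identity -/

section Averages

variable {q : ℓ^∞(G, ℂ) →L[ℂ] ℂ} {H : Subgroup G}

theorem poisson_translation_eq_of_mk_eq (hqH : ∀ s ∈ H, ∀ f, q (translation G s f) = q f)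
    {g h : G} (hgh : (g : G ⧸ H) = h) (f : ℓ^∞(G, ℂ)) :
    poisson (translation G) q f g = poisson (translation G) q f h := by
  rw [poisson_apply, poisson_apply, ← hqH _ (QuotientGroup.eq.1 hgh) (translation G h⁻¹ f)]
  refine congrArg q ?_
  ext x
  simp only [translation_apply, mul_inv_rev, inv_inv, mul_assoc, mul_inv_cancel_left]

variable (H) in
/-- The pullback of a bounded function on `G` along representatives of the cosets of `H`, as a
multiplication operator. It is `G`-equivariant on the right `H`-invariant functions. -/
def cosetMultiplication : ℓ^∞(G, ℂ) →⋆ₐ[ℂ] (ℓ²(G ⧸ H, ℂ) →L[ℂ] ℓ²(G ⧸ H, ℂ)) :=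
  (multiplication _).comp (linftyComp Quotient.out)

theorem conjugation_cosetMultiplication (hqH : ∀ s ∈ H, ∀ f, q (translation G s f) = q f)
    (g : G) (f : ℓ^∞(G, ℂ)) :
    conjugation G (G ⧸ H) g (cosetMultiplication H (poisson (translation G) q f)) =
      cosetMultiplication H (poisson (translation G) q (translation G g f)) := by
  refine (conjugation_multiplication _ g _).trans (congrArg (multiplication _) ?_)
  ext y
  have mk_eq : ((g⁻¹ • y).out : G ⧸ H) = (g⁻¹ * y.out : G) := by
    rw [QuotientGroup.out_eq', ← smul_eq_mul, MulAction.Quotient.coe_smul_out]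
  exact (poisson_translation_eq_of_mk_eq hqH mk_eq f).trans <| by simp

variable {χ ω : (ℓ²(G ⧸ H, ℂ) →L[ℂ] ℓ²(G ⧸ H, ℂ)) →L[ℂ] ℂ}

theorem IsExtremalMean.conv_permutation_eq_zero_of_not_invariant (hq : IsExtremalMean q)
    (hqH : ∀ s ∈ H, ∀ f, q (translation G s f) = q f) (hχ : IsUnitalContractive χ) {s : G}
    (hs : ¬ ∀ f, q (translation G s f) = q f) :
    conv (conjugation G (G ⧸ H)) q χ (permutation G (G ⧸ H) s) = 0 := by
  obtain ⟨f, hf⟩ := not_forall.1 hs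
  have equivariant := conjugation_cosetMultiplication hqH
  have h := hq.conv_mul_map_poisson hχ equivariant f (permutation G (G ⧸ H) s)
  rw [permutation_mul, equivariant, hq.conv_map_poisson_mul hχ equivariant, mul_comm] at h
  exact (mul_eq_mul_left_iff.1 h).resolve_left hf

theorem conv_permutation_eq_zero_of_forall (hω : ∀ s ≠ 1, ω (permutation G (G ⧸ H) s) = 0) {s : G}
    (hs : s ≠ 1) : conv (conjugation G (G ⧸ H)) q ω (permutation G (G ⧸ H) s) = 0 := by
  have h : poisson (conjugation G (G ⧸ H)) ω (permutation G (G ⧸ H) s) = 0 := by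
    ext g
    rw [poisson_apply, conjugation_permutation]
    exact hω _ (mt conj_eq_one_iff.1 hs)
  rw [conv_apply, h, map_zero]

theorem cosetMultiplication_mul_permutation {F : ℓ^∞(G, ℂ)} {s : G}
    (hF : ∀ g, g⁻¹ * s * g ∉ H → F g = 0) :
    cosetMultiplication H F * permutation G (G ⧸ H) s = cosetMultiplication H F := by
  ext ξ y
  change F y.out * ξ (s⁻¹ • y) = F y.out * ξ y
  by_cases h : y.out⁻¹ * s * y.out ∈ H
  · have smul_eq : s • y = y := by
      rw [← MulAction.Quotient.coe_smul_out, smul_eq_mul, eq_comm]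
      nth_rw 1 [← QuotientGroup.out_eq' y]
      rwa [QuotientGroup.eq, ← mul_assoc]
    rw [inv_smul_eq_iff.2 smul_eq.symm]
  · rw [hF _ h, zero_mul, zero_mul]

theorem IsExtremalMean.conv_permutation_eq_zero (hq : IsExtremalMean q)
    (hH : ∀ s, s ∈ H ↔ ∀ f, q (translation G s f) = q f) (hχ : IsUnitalContractive χ)
    (hω : IsUnitalContractive ω) (hω_perm : ∀ s ≠ 1, ω (permutation G (G ⧸ H) s) = 0) {s : G}
    (hs : s ≠ 1) : conv (conjugation G (G ⧸ H)) q χ (permutation G (G ⧸ H) s) = 0 := by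
  let f := poisson (conjugation G (G ⧸ H)) χ (permutation G (G ⧸ H) s)
  have poisson_eq_zero (g : G) (hg : g⁻¹ * s * g ∉ H) : poisson (translation G) q f g = 0 := by
    rw [← poisson_conv, poisson_apply, conjugation_permutation]
    refine hq.conv_permutation_eq_zero_of_not_invariant (fun s => (hH s).1) hχ ?_
    rwa [← hH, inv_inv]
  have equivariant := conjugation_cosetMultiplication fun s => (hH s).1
  have h := hq.conv_map_poisson_mul hω equivariant f (permutation G (G ⧸ H) s)
  rwa [cosetMultiplication_mul_permutation poisson_eq_zero, hq.conv_map_poisson hω equivariant,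
    conv_permutation_eq_zero_of_forall hω_perm hs, mul_zero] at h

end Averages

section Simple

attribute [local instance] isClosed_redCstar

open scoped CStarAlgebra in
theorem IsCstarSimple.injective (hG : IsCstarSimple G) {B : Type*} [CStarAlgebra B] [Nontrivial B]
    (π : redCstar G →⋆ₐ[ℂ] B) : Function.Injective π := by
  have isClosed_ker : IsClosed (TwoSidedIdeal.ker π : Set (redCstar G)) := by
    have h : (TwoSidedIdeal.ker π : Set (redCstar G)) = π ⁻¹' {0} :=
      Set.ext fun x => TwoSidedIdeal.mem_ker π
    exact h ▸ isClosed_singleton.preimage (map_continuous π)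
  rw [← TwoSidedIdeal.ker_eq_bot]
  refine (hG _ isClosed_ker).resolve_right fun h_top => one_ne_zero (α := B) ?_
  rw [← map_one π, ← TwoSidedIdeal.mem_ker, h_top]
  trivial

open scoped CStarAlgebra in
theorem tau_mem_closure_convexHull_of_extension {B : Type*} [CStarAlgebra B]
    {α : G →* (B ≃⋆ₐ[ℂ] B)} {q : ℓ^∞(G, ℂ) →L[ℂ] ℂ} (hq : IsUnitalContractive q)
    {π : redCstar G →⋆ₐ[ℂ] B} (hπ : ∀ g a, α g (π a) = π (uu g * a * uu g⁻¹))
    {φ : WeakDual ℂ (redCstar G)} {χ : B →L[ℂ] ℂ} (hχ : ∀ a, χ (π a) = φ a)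
    (h_tau : ∀ s, conv α q χ (π (uu s)) = tau G (uu s)) :
    tau G ∈ closure (convexHull ℝ {ψ : WeakDual ℂ (redCstar G) | ∃ g : G, ψ = dualAct g φ}) := by
  have orbit_eq : {ψ | ∃ g : G, ψ = dualAct g φ} = Set.range (dualAct · φ) :=
    Set.ext fun ψ => exists_congr fun g => eq_comm
  have conv_eq_tau : (conv α q χ).comp ⟨π.toAlgHom.toLinearMap, map_continuous π⟩ =
      WeakDual.toStrongDual (tau G) := redCstar_ext h_tau
  rw [orbit_eq]
  refine mem_closure_convexHull_range hq fun Λ => ?_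
  obtain ⟨a, ha⟩ := LinearMap.dualEmbedding_surjective (topDualPairing ℂ (redCstar G)) Λ
  have Λ_apply (ψ : WeakDual ℂ (redCstar G)) : Λ ψ = ψ a := by rw [← ha]; rfl
  refine ⟨poisson α χ (π a), fun g => ?_, congr($conv_eq_tau a).trans (Λ_apply _).symm⟩
  rw [poisson_apply, hπ, hχ, inv_inv, Λ_apply]
  rfl

/-- The stabilizer of a functional on `ℓ^∞(G)` under left translation. -/
def functionalStabilizer (q : ℓ^∞(G, ℂ) →L[ℂ] ℂ) : Subgroup G where
  carrier := {s | ∀ f, q (translation G s f) = q f}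
  one_mem' f := by rw [map_one]; rfl
  mul_mem' {s t} hs ht f := by rw [map_mul]; exact (hs _).trans (ht f)
  inv_mem' {s} hs f := by
    rw [← hs, map_inv]
    exact congrArg q ((translation G s).apply_symm_apply f)

theorem IsCstarSimple.tau_mem_closure_convexHull (hG : IsCstarSimple G)
    {φ : WeakDual ℂ (redCstar G)} (hφ : IsState φ) :
    tau G ∈ closure (convexHull ℝ {ψ : WeakDual ℂ (redCstar G) | ∃ g : G, ψ = dualAct g φ}) := by
  obtain ⟨q, hq⟩ := exists_isExtremalMean G
  let H := functionalStabilizer q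
  obtain ⟨π, π_uu⟩ := exists_starAlgHom_uu_eq_permutation_quotient (H := H) hq.isUnitalContractive
    fun _ hs => hs
  have norm_π (a) : ‖π a‖ = ‖a‖ := NonUnitalStarAlgHom.norm_map π (hG.injective π) a
  have conjugation_π (g a) : conjugation G (G ⧸ H) g (π a) = π (uu g * a * uu g⁻¹) := by
    rw [map_mul, map_mul, π_uu, π_uu, map_inv]
    rfl
  obtain ⟨χ, hχ, χ_π⟩ := hφ.isUnitalContractive.exists_extension norm_π
  obtain ⟨ω, hω, ω_π⟩ := (isState_tau G).isUnitalContractive.exists_extension norm_π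
  have ω_permutation (s : G) (hs : s ≠ 1) : ω (permutation G (G ⧸ H) s) = 0 := by
    rw [← π_uu, ω_π]
    exact (tau_uu s).trans (if_neg hs)
  refine tau_mem_closure_convexHull_of_extension hq.isUnitalContractive conjugation_π χ_π
    fun s => ?_
  rcases eq_or_ne s 1 with rfl | hs
  · rw [uu_one, map_one, (hq.isUnitalContractive.conv _ hχ).map_one, (isState_tau G).1]
  · rw [π_uu, hq.conv_permutation_eq_zero (fun _ => Iff.rfl) hχ hω ω_permutation hs, tau_uu,
      if_neg hs]

end Simple

/-- A discrete group is C*-simple if and only if for every state `φ` on `C*_λ(G)` the weak*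
closed convex hull of the `G`-orbit of `φ` contains the canonical trace. -/
theorem cstarSimple_iff_trace_in_closed_convex_orbit_of_states (G : Type u) [Group G] :
    IsCstarSimple G ↔
      ∀ φ : WeakDual ℂ (redCstar G), IsState φ →
        tau G ∈ closure (convexHull ℝ {ψ : WeakDual ℂ (redCstar G) | ∃ g : G, ψ = dualAct g φ}) := by
  exact ⟨fun hG _ hφ => hG.tau_mem_closure_convexHull hφ,
    isCstarSimple_of_forall_tau_mem_closure_convexHull⟩
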